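/- In the correlated Erdős–Rényi detection problem with sparse parent graph, suppose there exists α > 0 with p_n ≤ n^{−α} for all sufficiently large n, there exists a sequence δ_n with n^{1/3}·δ_n → ∞ such that s_n² ≤ (1−δ_n)/(n·p_n) and s_n² ≤ 0.01 for all n, and additionally s_n → 0. Then TV(P_{n,p_n,s_n}, Q_{n,p_n,s_n}) → 0 as n → ∞; in particular even weak detection is impossible. -/

import Mathlib

/-!
The proof is a truncated second moment argument. Write `q = p s²` for the probability that a given
edge is present in both graphs, and `H = A ∧ B^π` for the intersection graph under the hidden
permutation `π`; under the planted law its edges are i.i.d. Bernoulli(`q`).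

**Truncation.** A graph is called a pseudoforest if no edge set spans fewer vertices than it has
edges. A graph that is not a pseudoforest contains a walk on `k` distinct vertices that starts with
a return to one of them and ends with a return to one of them, and uses `k + 1` distinct edges
(`exists_cert`). A union bound over such walks shows that `H` fails to be a pseudoforest with
probability at most `ε = ∑ k² n^k q^(k+1)` (`bad_mass_le`), which is at most `2 / (n δ³)` as soon as
`n q ≤ 1 - δ` (`eps_le`). This is where `n^(1/3) δ → ∞` enters.

**Second moment.** Let `P'` be the planted weight restricted to the event that `H` is a
pseudoforest. For two permutations `π`, `σ` put `τ = π⁻¹ σ`. The sum of `P'_π P'_σ / Q` factorises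
over the cycles of `τ` on edges. The untruncated sum over one cycle of length `ℓ` is
`1 + ρ^(2ℓ)`, where `ρ ≤ s` is the correlation of the two edge indicators (`full_sum`), and the
configuration with every edge of the cycle present in both graphs alone contributes
`s^(2ℓ) ≥ ρ^(2ℓ)`; so the other configurations contribute at most `1` (`orbit_sum_le`). Hence the
sum is at most `∑ s^(2|H|)` over the `τ`-invariant pseudoforests `H` (`trunc_sum_le`). Averaging
over `τ` and using the orbit-stabilizer theorem, this becomes a sum over isomorphism classes of
pseudoforests (`sum_stabilizer_le`). A pseudoforest without isolated vertices on `m` vertices is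
determined up to isomorphism by two monotone self-maps of `Fin m` (`exists_graph_code`), so there
are at most `16^m` classes, and each has at least `m / 2` edges. The second moment is therefore at
most `∑ (16 s)^m ≤ (1 - 16 s)⁻¹`, which tends to `1` since `s → 0` (`second_moment`).

By Cauchy-Schwarz, `TV(P, Q) ≤ ε + √((1 - 16 s)⁻¹ - 1 + 2 ε)`, and this tends to `0` (`TV_bound`).
-/

open MeasureTheory ProbabilityTheory Filter

noncomputable section

/-- The set of potential edges on `n` vertices: unordered pairs of distinct elements of `Fin n`. -/
abbrev Edge (n : ℕ) := {e : Sym2 (Fin n) // ¬ e.IsDiag}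

instance (n : ℕ) : MeasurableSpace (Equiv.Perm (Fin n)) := ⊤

/-- The uniform distribution on permutations of `[n]`. -/
def permUniform (n : ℕ) : Measure (Equiv.Perm (Fin n)) :=
  (PMF.uniformOfFintype (Equiv.Perm (Fin n))).toMeasure

/-- The action of a node permutation on edges, `π({i,j}) = {π(i), π(j)}`. -/
def edgeMap {n : ℕ} (π : Equiv.Perm (Fin n)) (e : Edge n) : Edge n :=
  ⟨Sym2.map π e.1, fun h => e.2 ((Sym2.isDiag_map π.injective).mp h)⟩

/-- The Bernoulli(p) distribution on `Bool` (a probability measure when `p ∈ [0,1]`). -/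
def bern (p : ℝ) : Measure Bool :=
  ENNReal.ofReal p • Measure.dirac true + ENNReal.ofReal (1 - p) • Measure.dirac false

/-- i.i.d. Bernoulli(p) edge indicators. -/
def bernEdges (n : ℕ) (p : ℝ) : Measure (Edge n → Bool) :=
  Measure.pi fun _ => bern p

/-- The null model `Q_{n,p,s}` of the correlated Erdős–Rényi problem: two independent families of
i.i.d. Bernoulli(ps) edge indicators. -/
def QER (n : ℕ) (p s : ℝ) : Measure ((Edge n → Bool) × (Edge n → Bool)) :=
  (bernEdges n (p * s)).prod (bernEdges n (p * s))

/-- The planted model `P_{n,p,s}`: draw `π` uniformly, a parent graph `G` with i.i.d. Bernoulli(p)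
edges, and independent subsampling families `U`, `V` of i.i.d. Bernoulli(s); output
`A_e = G_e · U_e` and `B` with `B_{π(e)} = G_e · V_e`, i.e.
`B_f = G_{π⁻¹(f)} · V_{π⁻¹(f)}`. -/
def PER (n : ℕ) (p s : ℝ) : Measure ((Edge n → Bool) × (Edge n → Bool)) :=
  Measure.map
    (fun ω : Equiv.Perm (Fin n) × (Edge n → Bool) × (Edge n → Bool) × (Edge n → Bool) =>
      (fun e => ω.2.1 e && ω.2.2.1 e,
       fun f => ω.2.1 (edgeMap ω.1⁻¹ f) && ω.2.2.2 (edgeMap ω.1⁻¹ f)))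
    ((permUniform n).prod ((bernEdges n p).prod ((bernEdges n s).prod (bernEdges n s))))

/-- Total variation distance: `sup` over measurable sets `S` of `|P(S) - Q(S)|`. -/
def TV {Ω : Type*} [MeasurableSpace Ω] (P Q : Measure Ω) : ℝ :=
  ⨆ S : {S : Set Ω // MeasurableSet S}, |(P S.1).toReal - (Q S.1).toReal|

/-! ### The second moment along one cycle of a permutation -/

/-- The weight of `b` under the Bernoulli(`p`) law. -/
def bw (p : ℝ) (b : Bool) : ℝ := if b then p else 1 - p

/-- The weight of `(a, b)` under the joint law of `(G U, G V)` with `G ~ Bernoulli(p)` and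
`U, V ~ Bernoulli(s)` independent: the law of one planted pair of edge indicators. -/
def jw (p s : ℝ) (a b : Bool) : ℝ :=
  if a && b then p * s ^ 2 else if a || b then p * s * (1 - s) else 1 - 2 * (p * s) + p * s ^ 2

/-- The contribution of one edge to the second moment `P_π P_σ / Q`. Here `x` holds the values of
`A` at `e` and of `B` at `π e`, and `b` is the value of `B` at `σ e`; every value of `A` and of `B`
occurs exactly once as a component of some `x`, so the denominators multiply up to `Q`. -/
def uw (p s : ℝ) (x : Bool × Bool) (b : Bool) : ℝ :=
  jw p s x.1 x.2 * jw p s x.1 b / (bw (p * s) x.1 * bw (p * s) x.2)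

/-- The correlation coefficient of a pair of Bernoulli variables with joint law `jw p s`. -/
def corr (p s : ℝ) : ℝ := s * (1 - p) / (1 - p * s)

/-- Up to the factor `bw (p * s) b'`, summing out `A` leaves the kernel `1 + ρ² χ(b) χ(b')`, where `χ` is the centred and
normalised coordinate function of Bernoulli(`p s`). -/
theorem uw_sum {p s : ℝ} (hp : 0 < p) (hp1 : p < 1) (hs : 0 < s) (hs1 : s ≤ 1) (b b' : Bool) :
    ∑ a, uw p s (a, b) b' = bw (p * s) b' *
      (1 + corr p s ^ 2 / (p * s * (1 - p * s)) *
        ((if b then 1 - p * s else - (p * s)) * (if b' then 1 - p * s else - (p * s)))) := by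
  have h1 : 0 < 1 - p * s := by nlinarith
  have h0 : 0 < p * s := by positivity
  rcases b <;> rcases b' <;> simp [uw, jw, bw, corr] <;> field_simp <;> ring

theorem sum_prod_pi {E β : Type*} [Fintype E] [DecidableEq E] [Fintype β] (f : E → β → ℝ) :
    ∑ x : E → β, ∏ e, f e (x e) = ∏ e, ∑ b, f e b := by
  rw [Finset.prod_univ_sum]; simp

/-- The untruncated second moment. Expanding the product of the kernels of `uw_sum` over edge sets
`S`, orthogonality of `1` and `χ` leaves only the sets invariant under `τ`. -/
theorem full_sum {E : Type*} [Fintype E] [DecidableEq E] (τ : Equiv.Perm E)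
    {p s : ℝ} (hp : 0 < p) (hp1 : p < 1) (hs : 0 < s) (hs1 : s ≤ 1) :
    ∑ X : E → Bool × Bool, ∏ e, uw p s (X e) (X (τ e)).2 =
      ∑ S : Finset E with (∀ e, τ e ∈ S ↔ e ∈ S), corr p s ^ (2 * S.card) := by
  have h1 : 0 < 1 - p * s := by nlinarith
  have h0 : 0 < p * s := by positivity
  set ψ : Bool → ℝ := fun b => if b then 1 - p * s else - (p * s) with hψ
  set c : ℝ := corr p s ^ 2 / (p * s * (1 - p * s)) with hc
  have step1 : ∑ X : E → Bool × Bool, ∏ e, uw p s (X e) (X (τ e)).2 =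
      ∑ B : E → Bool, ∏ e, ∑ a, uw p s (a, B e) (B (τ e)) := by
    rw [← (Equiv.arrowProdEquivProdArrow E (fun _ => Bool) (fun _ => Bool)).symm.sum_comp,
      Fintype.sum_prod_type, Finset.sum_comm]
    refine Finset.sum_congr rfl fun B _ => ?_
    rw [← sum_prod_pi (fun e a => uw p s (a, B e) (B (τ e)))]
    rfl
  have step2 : ∀ B : E → Bool, ∏ e, ∑ a, uw p s (a, B e) (B (τ e)) =
      ∑ S : Finset E, c ^ S.card * ∏ e, (bw (p * s) (B e) * (if e ∈ S then ψ (B e) else 1) *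
        (if τ.symm e ∈ S then ψ (B e) else 1)) := by
    intro B
    simp_rw [uw_sum hp hp1 hs hs1]
    rw [Finset.prod_mul_distrib, Equiv.prod_comp τ (fun e => bw (p * s) (B e)),
      Finset.prod_one_add, Finset.mul_sum, Finset.powerset_univ]
    refine Finset.sum_congr rfl fun S _ => ?_
    rw [Finset.prod_mul_distrib, Finset.prod_const, Finset.prod_mul_distrib,
      Finset.prod_mul_distrib, Finset.prod_mul_distrib,
      ← Equiv.prod_comp τ (fun e => if τ.symm e ∈ S then ψ (B e) else 1)]
    simp only [Equiv.symm_apply_apply, Finset.prod_ite_mem, Finset.univ_inter]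
    ring
  rw [step1]
  simp_rw [step2]
  rw [Finset.sum_comm, Finset.sum_filter]
  refine Finset.sum_congr rfl fun S _ => ?_
  rw [← Finset.mul_sum]
  rw [sum_prod_pi (fun e b => bw (p * s) b * (if e ∈ S then ψ b else 1) *
        (if τ.symm e ∈ S then ψ b else 1))]
  split_ifs with hS
  · have : ∀ e, (∑ b, bw (p * s) b * (if e ∈ S then ψ b else 1) *
        (if τ.symm e ∈ S then ψ b else 1)) = if e ∈ S then p * s * (1 - p * s) else 1 := by
      intro e
      have h2 := hS (τ.symm e)
      rw [Equiv.apply_symm_apply] at h2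
      by_cases he : e ∈ S
      · simp [he, h2.1 he, bw, ψ]; ring
      · have he' : τ.symm e ∉ S := fun h => he (h2.2 h)
        simp [he, he', bw]
    simp_rw [this]
    simp only [Finset.prod_ite_mem, Finset.univ_inter, Finset.prod_const]
    rw [← mul_pow, hc, div_mul_cancel₀ _ (by positivity), pow_mul]
  · push Not at hS
    obtain ⟨e, he⟩ := hS
    rw [Finset.prod_eq_zero (Finset.mem_univ (τ e)), mul_zero]
    rcases he with ⟨h, h'⟩ | ⟨h, h'⟩ <;> simp [h, h', bw, ψ] <;> ring

/-- If `τ` is transitive, the configurations other than the all-ones one contribute at most `1`: the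
full sum is at most `1 + ρ^(2ℓ)`, and the all-ones configuration accounts for `s^(2ℓ) ≥ ρ^(2ℓ)`. -/
theorem orbit_sum_le {E : Type*} [Fintype E] [DecidableEq E] (τ : Equiv.Perm E)
    {p s : ℝ} (hp : 0 < p) (hp1 : p < 1) (hs : 0 < s) (hs1 : s ≤ 1)
    (htr : ∀ S : Finset E, (∀ e, τ e ∈ S ↔ e ∈ S) → S = ∅ ∨ S = Finset.univ) :
    ∑ X : E → Bool × Bool with X ≠ (fun _ => (true, true)),
      ∏ e, uw p s (X e) (X (τ e)).2 ≤ 1 := by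
  have h1 : 0 < 1 - p * s := by nlinarith
  have h0 : 0 < p * s := by positivity
  have hone : ∏ e : E, uw p s ((fun _ => (true, true)) e : Bool × Bool) true =
      s ^ (2 * Fintype.card E) := by
    rw [Finset.prod_const, pow_mul]
    congr 1
    simp [uw, jw, bw]; field_simp
  have hfull := full_sum τ hp hp1 hs hs1
  rw [← Finset.sum_filter_add_sum_filter_not _ (fun X => X ≠ (fun _ => (true, true)))] at hfull
  have hnot : (Finset.univ.filter (fun X : E → Bool × Bool => ¬ X ≠ (fun _ => (true, true)))) =
      {fun _ => (true, true)} := by ext; simp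
  rw [hnot, Finset.sum_singleton, hone] at hfull
  have hle : ∑ S : Finset E with (∀ e, τ e ∈ S ↔ e ∈ S), corr p s ^ (2 * S.card) ≤
      1 + corr p s ^ (2 * Fintype.card E) := by
    have hsub : (Finset.univ.filter (fun S : Finset E => ∀ e, τ e ∈ S ↔ e ∈ S)) ⊆
        {∅} ∪ {Finset.univ} := by
      intro S hS
      have := htr S (Finset.mem_filter.1 hS).2
      simpa using this
    have hnn : ∀ k, 0 ≤ corr p s ^ (2 * k) := fun k => by rw [pow_mul]; positivity
    refine (Finset.sum_le_sum_of_subset_of_nonneg hsub fun _ _ _ => hnn _).trans ?_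
    have hui := Finset.sum_union_inter (s₁ := {(∅ : Finset E)}) (s₂ := {Finset.univ})
      (f := fun S : Finset E => corr p s ^ (2 * S.card))
    have h3 : 0 ≤ ∑ S ∈ ({(∅ : Finset E)} ∩ {Finset.univ} : Finset (Finset E)),
      corr p s ^ (2 * S.card) := Finset.sum_nonneg fun _ _ => hnn _
    simp only [Finset.sum_singleton, Finset.card_empty, mul_zero, pow_zero,
      Finset.card_univ] at hui
    linarith
  have hcs : corr p s ^ (2 * Fintype.card E) ≤ s ^ (2 * Fintype.card E) := by
    have hc0 : 0 ≤ corr p s := div_nonneg (mul_nonneg hs.le (by linarith)) h1.le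
    apply pow_le_pow_left₀ hc0
    rw [corr, div_le_iff₀ h1]
    nlinarith [mul_nonneg hs.le hp.le, mul_nonneg (mul_nonneg hs.le hp.le) (sub_nonneg.2 hs1)]
  linarith

/-! ### The truncated second moment for a fixed permutation -/

open Classical in
/-- Distributivity for a product over blocks, the blocks being the fibres of `mk`. -/
theorem sum_prod_fiber {E O β : Type*} [Fintype E] [Fintype O]
    [Fintype β] (mk : E → O) (v : (o : O) → ({e // mk e = o} → β) → ℝ) :
    ∑ X : E → β, ∏ o, v o (fun e => X e) = ∏ o, ∑ x : {e // mk e = o} → β, v o x := by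
  rw [Finset.prod_univ_sum, Fintype.piFinset_univ]
  let φ : (E → β) ≃ ((o : O) → {e // mk e = o} → β) :=
    { toFun := fun X o e => X e
      invFun := fun x e => x (mk e) ⟨e, rfl⟩
      left_inv := fun X => rfl
      right_inv := fun x => by
        funext o e
        obtain ⟨e, rfl⟩ := e
        rfl }
  exact Fintype.sum_equiv φ _ _ fun X => rfl

theorem uw_nonneg {p s : ℝ} (hp : 0 < p) (hp1 : p < 1) (hs : 0 < s) (hs1 : s ≤ 1)
    (x : Bool × Bool) (b : Bool) : 0 ≤ uw p s x b := by
  have h1 : 0 < 1 - p * s := by nlinarith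
  have h0 : 0 < p * s := by positivity
  have h2 : 0 ≤ 1 - s := by linarith
  have h3 : 0 ≤ 1 - 2 * (p * s) + p * s ^ 2 := by nlinarith [mul_nonneg hp.le (sq_nonneg (1 - s))]
  rcases x with ⟨a, c⟩
  rcases a <;> rcases c <;> rcases b <;> simp [uw, jw, bw] <;> positivity

open Classical in
/-- `mk` labels the cycles of `τ`. The configurations `X` for which `T` is exactly the set of cycles
on which `X` is constantly `(true, true)` contribute at most `s^(2ℓ)`, with `ℓ` the total length of
the cycles in `T`: each cycle outside `T` contributes at most `1` by `orbit_sum_le`. -/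
theorem fiber_sum_le {E O : Type*} [Fintype E] [Fintype O] (τ : Equiv.Perm E)
    {p s : ℝ} (hp : 0 < p) (hp1 : p < 1) (hs : 0 < s) (hs1 : s ≤ 1) (mk : E → O)
    (hmkτ : ∀ e, mk (τ e) = mk e) (hcyc : ∀ e f, mk e = mk f → τ.SameCycle e f) (T : Finset O) :
    ∑ X : E → Bool × Bool with
        (Finset.univ.filter fun o => ∀ e, mk e = o → X e = (true, true)) = T,
      ∏ e, uw p s (X e) (X (τ e)).2 ≤ s ^ (2 * (Finset.univ.filter fun e => mk e ∈ T).card) := by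
  have h1 : 0 < 1 - p * s := by nlinarith
  have h0 : 0 < p * s := by positivity
  let τo : (o : O) → Equiv.Perm {e // mk e = o} := fun o =>
    τ.subtypePerm (fun e => by rw [hmkτ])
  let v : (o : O) → ({e // mk e = o} → Bool × Bool) → ℝ := fun o x =>
    if (x = (fun _ => (true, true)) ↔ o ∈ T) then ∏ e, uw p s (x e) (x (τo o e)).2 else 0
  have e1 : ∑ X : E → Bool × Bool with
        (Finset.univ.filter fun o => ∀ e, mk e = o → X e = (true, true)) = T,
        ∏ e, uw p s (X e) (X (τ e)).2 =
      ∑ X : E → Bool × Bool, ∏ o, v o (fun e => X e) := by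
    rw [Finset.sum_filter]
    refine Finset.sum_congr rfl fun X _ => ?_
    split_ifs with h
    · rw [← Fintype.prod_fiberwise mk]
      refine Finset.prod_congr rfl fun o _ => ?_
      have : ((fun e : {e // mk e = o} => X e) = (fun _ => (true, true)) ↔ o ∈ T) := by
        rw [← h]; simp [funext_iff]
      simp only [v]
      rw [if_pos this]
      rfl
    · have : ∃ o, ¬ ((fun e : {e // mk e = o} => X e) = (fun _ => (true, true)) ↔ o ∈ T) := by
        by_contra! hc
        apply h
        ext o
        rw [← hc o]
        simp [funext_iff]
      obtain ⟨o, ho⟩ := this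
      symm
      apply Finset.prod_eq_zero (Finset.mem_univ o)
      simp only [v]
      rw [if_neg ho]
  rw [e1, sum_prod_fiber mk v]
  have e2 : ∀ o, ∑ x, v o x ≤ if o ∈ T then s ^ (2 * Fintype.card {e // mk e = o}) else 1 := by
    intro o
    split_ifs with ho
    · rw [Finset.sum_eq_single (fun _ => (true, true))]
      · simp only [v]
        rw [if_pos (by simp [ho]), Finset.prod_const, pow_mul]
        apply le_of_eq
        congr 1
        simp [uw, jw, bw]; field_simp
      · intro x _ hx
        simp [v, ho, hx]
      · simp
    · simp only [v, ho, iff_false]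
      rw [← Finset.sum_filter]
      refine orbit_sum_le (τo o) hp hp1 hs hs1 fun S hS => ?_
      rcases S.eq_empty_or_nonempty with h | ⟨e, he⟩
      · exact Or.inl h
      right
      have hcl : ∀ f : {e // mk e = o}, (∀ i : ℤ, ((τo o) ^ i) f ∈ S ↔ f ∈ S) := by
        intro f i
        induction i using Int.induction_on generalizing f with
        | zero => simp
        | succ i ih => rw [zpow_add_one, Equiv.Perm.mul_apply, ih, hS]
        | pred i ih => rw [zpow_sub_one, Equiv.Perm.mul_apply, ih, ← hS]; simp
      ext f
      simp only [Finset.mem_univ, iff_true]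
      obtain ⟨i, hi⟩ : Equiv.Perm.SameCycle τ e.1 f.1 := hcyc _ _ (e.2.trans f.2.symm)
      have : f = (τo o ^ i) e := by
        apply Subtype.ext
        rw [Equiv.Perm.subtypePerm_zpow]
        simp [hi]
      rw [this, hcl]
      exact he
  have hv : ∀ o x, 0 ≤ v o x := by
    intro o x
    simp only [v]
    split_ifs
    · exact Finset.prod_nonneg fun e _ => uw_nonneg hp hp1 hs hs1 _ _
    · exact le_rfl
  refine (Finset.prod_le_prod (fun o _ => Finset.sum_nonneg fun x _ => hv o x)
    fun o _ => e2 o).trans ?_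
  rw [Finset.prod_ite_mem, Finset.univ_inter, Finset.prod_pow_eq_pow_sum, ← Finset.mul_sum]
  apply le_of_eq
  congr 2
  rw [Finset.card_eq_sum_card_fiberwise (f := mk) (t := T)
      (fun e he => by simpa using he)]
  refine Finset.sum_congr rfl fun o ho => ?_
  rw [Fintype.card_subtype]
  congr 1
  ext e
  simp only [Finset.mem_filter, Finset.mem_univ, true_and]
  constructor
  · rintro rfl; exact ⟨ho, rfl⟩
  · exact fun h => h.2

open Classical in
/-- The bound of `trunc_sum_le`, for an arbitrary labelling `mk` of the cycles of `τ`. -/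
theorem trunc_sum_le_aux {E O : Type*} [Fintype E] [Fintype O] (τ : Equiv.Perm E)
    {p s : ℝ} (hp : 0 < p) (hp1 : p < 1) (hs : 0 < s) (hs1 : s ≤ 1)
    (mk : E → O) (hsurj : Function.Surjective mk)
    (hmkτ : ∀ e, mk (τ e) = mk e) (hcyc : ∀ e f, mk e = mk f → τ.SameCycle e f)
    (good : Finset E → Prop) (hmono : ∀ S T, S ⊆ T → good T → good S) :
    ∑ X : E → Bool × Bool with good (Finset.univ.filter fun e => X e = (true, true)),
      ∏ e, uw p s (X e) (X (τ e)).2 ≤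
    ∑ S : Finset E with good S ∧ ∀ e, τ e ∈ S ↔ e ∈ S, s ^ (2 * S.card) := by
  have h1 : 0 < 1 - p * s := by nlinarith
  have h0 : 0 < p * s := by positivity
  let ones : (X : E → Bool × Bool) → Finset O := fun X =>
    Finset.univ.filter fun o => ∀ e, mk e = o → X e = (true, true)
  let pre : Finset O → Finset E := fun T => Finset.univ.filter fun e => mk e ∈ T
  have hpre : Function.Injective pre := by
    intro T T' h
    ext o
    obtain ⟨e, rfl⟩ := hsurj o
    have := congrArg (e ∈ ·) h
    simpa [pre] using this
  have hnn : ∀ X : E → Bool × Bool, 0 ≤ ∏ e, uw p s (X e) (X (τ e)).2 := fun X =>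
    Finset.prod_nonneg fun e _ => uw_nonneg hp hp1 hs hs1 _ _
  have inner : ∀ T : Finset O, ∑ X : E → Bool × Bool with ones X = T,
      ∏ e, uw p s (X e) (X (τ e)).2 ≤ s ^ (2 * (pre T).card) :=
    fiber_sum_le τ hp hp1 hs hs1 mk hmkτ hcyc
  have hmaps : ∀ X ∈ Finset.univ.filter (fun X : E → Bool × Bool =>
      good (Finset.univ.filter fun e => X e = (true, true))),
      ones X ∈ Finset.univ.filter (fun T => good (pre T)) := by
    intro X hX
    simp only [Finset.mem_filter, Finset.mem_univ, true_and] at hX ⊢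
    refine hmono _ _ (fun e he => ?_) hX
    simp only [pre, ones, Finset.mem_filter, Finset.mem_univ, true_and] at he ⊢
    exact he e rfl
  rw [← Finset.sum_fiberwise_of_maps_to hmaps]
  calc _ ≤ ∑ T ∈ Finset.univ.filter (fun T => good (pre T)), s ^ (2 * (pre T).card) := by
        refine Finset.sum_le_sum fun T _ => le_trans ?_ (inner T)
        refine Finset.sum_le_sum_of_subset_of_nonneg ?_ fun X _ _ => hnn X
        intro X hX
        simp only [Finset.mem_filter, Finset.mem_univ, true_and] at hX ⊢
        exact hX.2
    _ = ∑ S ∈ (Finset.univ.filter (fun T => good (pre T))).image pre, s ^ (2 * S.card) :=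
        by rw [Finset.sum_image hpre.injOn]
    _ ≤ _ := by
        refine Finset.sum_le_sum_of_subset_of_nonneg ?_ fun _ _ _ => by positivity
        intro S hS
        simp only [Finset.mem_image, Finset.mem_filter, Finset.mem_univ, true_and] at hS ⊢
        obtain ⟨T, hT, rfl⟩ := hS
        exact ⟨hT, fun e => by simp [pre, hmkτ]⟩

open Classical in
/-- The truncated second moment for a fixed permutation `τ` of the edges and any property `good`
that is closed under taking subgraphs: if the intersection graph is good, so is the union of the
cycles entirely contained in it, which is a `τ`-invariant set. -/
theorem trunc_sum_le {E : Type*} [Fintype E] (τ : Equiv.Perm E)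
    {p s : ℝ} (hp : 0 < p) (hp1 : p < 1) (hs : 0 < s) (hs1 : s ≤ 1)
    (good : Finset E → Prop) (hmono : ∀ S T, S ⊆ T → good T → good S) :
    ∑ X : E → Bool × Bool with good (Finset.univ.filter fun e => X e = (true, true)),
      ∏ e, uw p s (X e) (X (τ e)).2 ≤
    ∑ S : Finset E with good S ∧ ∀ e, τ e ∈ S ↔ e ∈ S, s ^ (2 * S.card) :=
  trunc_sum_le_aux τ hp hp1 hs hs1 (Quotient.mk (Equiv.Perm.SameCycle.setoid τ))
    Quotient.mk_surjective
    (fun e => Quotient.sound (Equiv.Perm.sameCycle_apply_left.2 (Equiv.Perm.SameCycle.refl τ e)))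
    (fun _ _ h => Quotient.exact h) good hmono

/-! ### Encoding functional graphs by monotone maps -/

/-- The adjacency relation on `Fin m` encoded by two self-maps: `i` is joined to `f i`, and to `g i`
if `i` is a fixed point of `f`. -/
def codeAdj {m : ℕ} (f g : Fin m → Fin m) (i j : Fin m) : Prop :=
  f i = j ∨ f j = i ∨ (f i = i ∧ g i = j) ∨ (f j = j ∧ g j = i)

theorem digits_lt {m : ℕ} (a : ℕ → ℕ) (ha : ∀ i, a i < m) (N : ℕ) :
    ∑ i ∈ Finset.range N, a i * m ^ i < m ^ N := by
  induction N with
  | zero => simp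
  | succ N ih =>
    rw [Finset.sum_range_succ, pow_succ]
    have := Nat.mul_le_mul_right (m ^ N) (Nat.succ_le_of_lt (ha N))
    rw [Nat.succ_mul] at this
    rw [mul_comm (m ^ N) m]
    omega

/-- Every component of the functional graph of `h` has a root `c v`, reached from `v` by iterating
`h`; a vertex visited infinitely often serves, chosen as a function of the set of such vertices. -/
theorem exists_retract {W : Type*} [Finite W] (h : W → W) :
    ∃ c : W → W, (∀ v, c (h v) = c v) ∧ ∀ v, ∃ i, h^[i] v = c v := by
  let S : W → W → Prop := fun v w => ∀ N, ∃ i ≥ N, h^[i] v = w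
  have hS : ∀ v, S (h v) = S v := by
    intro v
    funext w
    apply propext
    constructor
    · intro H N
      obtain ⟨i, hi, e⟩ := H N
      exact ⟨i + 1, by omega, by rwa [Function.iterate_succ_apply]⟩
    · intro H N
      obtain ⟨i, hi, e⟩ := H (N + 1)
      obtain ⟨j, rfl⟩ : ∃ j, i = j + 1 := ⟨i - 1, by omega⟩
      exact ⟨j, by omega, by rwa [Function.iterate_succ_apply] at e⟩
  have hne : ∀ v, ∃ w, S v w := by
    intro v
    obtain ⟨w, hw⟩ := Finite.exists_infinite_fiber (fun i : ℕ => h^[i] v)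
    refine ⟨w, fun N => ?_⟩
    obtain ⟨i, hi, hN⟩ := (Set.infinite_coe_iff.1 hw).exists_gt N
    exact ⟨i, hN.le, hi⟩
  have : ∀ v, Nonempty W := fun v => ⟨v⟩
  refine ⟨fun v => @Classical.epsilon W ⟨v⟩ (S v), fun v => ?_, fun v => ?_⟩
  · simp only [hS]
  · obtain ⟨i, -, hi⟩ := (@Classical.epsilon_spec W (S v) (hne v)) 0
    exact ⟨i, hi⟩

/-- The vertices of a functional graph can be ordered so that the graph is encoded by two monotone
maps. Cutting the edge out of the root of each component gives a map `f` whose iterates reach the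
root; the vertices are ordered by the address `v, f v, f² v, …` read with the root as leading digit.
Both `f` and `v ↦ h (root of v)` preserve this order. -/
theorem exists_code {W : Type*} [Fintype W] (h : W → W) :
    ∃ (σ : Fin (Fintype.card W) ≃ W) (f g : Fin (Fintype.card W) → Fin (Fintype.card W)),
      Monotone f ∧ Monotone g ∧
      ∀ i j, i ≠ j → ((h (σ i) = σ j ∨ h (σ j) = σ i) ↔ codeAdj f g i j) := by
  classical
  obtain ⟨c, hch, hreach⟩ := exists_retract h
  set m := Fintype.card W with hm
  let ν : W ≃ Fin m := Fintype.equivFin W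
  let f : W → W := fun v => if c v = v then v else h v
  have hci : ∀ i v, c (h^[i] v) = c v := by
    intro i
    induction i with
    | zero => intro v; rfl
    | succ i ih => intro v; rw [Function.iterate_succ_apply, ih, hch]
  have hcc : ∀ v, c (c v) = c v := by
    intro v
    obtain ⟨i, hi⟩ := hreach v
    conv_lhs => rw [← hi]
    exact hci i v
  have hcf : ∀ v, c (f v) = c v := by
    intro v
    by_cases hv : c v = v
    · simp [f, hv]
    · simp [f, hv, hch]
  have hfc : ∀ v, f (c v) = c v := fun v => by simp [f, hcc]
  have hreach' : ∀ v, ∃ j, f^[j] v = c v := by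
    have : ∀ i v, h^[i] v = c v → ∃ j, f^[j] v = c v := by
      intro i
      induction i with
      | zero => intro v hv; exact ⟨0, hv⟩
      | succ i ih =>
        intro v hv
        by_cases hcv : c v = v
        · exact ⟨0, hcv.symm⟩
        · rw [Function.iterate_succ_apply, ← hch v] at hv
          obtain ⟨j, hj⟩ := ih _ hv
          refine ⟨j + 1, ?_⟩
          rw [Function.iterate_succ_apply]
          have : f v = h v := by simp [f, hcv]
          rw [this, hj, hch]
    intro v
    obtain ⟨i, hi⟩ := hreach v
    exact this i v hi
  choose J hJ using hreach'
  set N := Finset.univ.sup J with hN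
  have hfN : ∀ v, f^[N] v = c v := by
    intro v
    have : J v ≤ N := Finset.le_sup (Finset.mem_univ v)
    obtain ⟨k, hk⟩ := Nat.exists_eq_add_of_le' this
    rw [hk, Function.iterate_add_apply, hJ, Function.iterate_fixed (hfc v)]
  -- The address of `v` as a number in base `m`, with digit `ν (f^[i] v)` at position `i`; the
  -- leading digit, at position `N`, is that of the root.
  let K : W → ℕ := fun v => ∑ i ∈ Finset.range (N + 1), (ν (f^[i] v) : ℕ) * m ^ i
  let R : W → ℕ := fun v => ∑ i ∈ Finset.range N, (ν (f^[i + 1] v) : ℕ) * m ^ i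
  have hKR : ∀ v, K v = m * R v + ν v := by
    intro v
    simp only [K, R]
    rw [Finset.sum_range_succ', Finset.mul_sum]
    simp only [pow_zero, mul_one, Function.iterate_zero, id_eq]
    congr 1
    refine Finset.sum_congr rfl fun i _ => ?_
    ring
  have hpos : ∀ v : W, 0 < m := fun v => Fintype.card_pos_iff.2 ⟨v⟩
  have hK1 : ∀ v, K v / m = R v := by
    intro v
    rw [hKR, Nat.mul_add_div (hpos v), Nat.div_eq_of_lt (ν v).2, add_zero]
  have hK2 : ∀ v, K v / m ^ N = ν (c v) := by
    intro v
    simp only [K]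
    rw [Finset.sum_range_succ, hfN, add_comm, mul_comm,
      Nat.mul_add_div (pow_pos (hpos v) N),
      Nat.div_eq_of_lt (digits_lt (fun i => (ν (f^[i] v) : ℕ)) (fun i => (ν _).2) N), add_zero]
  have hKf : ∀ v, K (f v) = K v / m + K v / m ^ N * m ^ N := by
    intro v
    rw [hK1, hK2]
    simp only [K]
    rw [Finset.sum_range_succ]
    simp only [← Function.iterate_succ_apply f]
    rw [Function.iterate_succ_apply, hfN, hcf]
  have hKinj : Function.Injective K := by
    intro u v huv
    have : (ν u : ℕ) = ν v := by
      have h1 := congrArg (· % m) huv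
      simpa [hKR, Nat.mod_eq_of_lt (ν u).2, Nat.mod_eq_of_lt (ν v).2] using h1
    exact ν.injective (Fin.ext this)
  have hfmono : ∀ u v, K u ≤ K v → K (f u) ≤ K (f v) := by
    intro u v huv
    rw [hKf, hKf]
    gcongr
  have hgmono : ∀ u v, K u ≤ K v → K (h (c u)) ≤ K (h (c v)) := by
    intro u v huv
    have h1 : (ν (c u) : ℕ) ≤ ν (c v) := by
      rw [← hK2, ← hK2]; exact Nat.div_le_div_right huv
    rcases h1.eq_or_lt with h2 | h2
    · rw [ν.injective (Fin.ext h2)]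
    · by_contra! h3
      have h4 := Nat.div_le_div_right (c := m ^ N) h3.le
      rw [hK2, hK2, hch, hch, hcc, hcc] at h4
      omega
  let σ : Fin m ≃ W := (Tuple.sort (K ∘ ν.symm)).trans ν.symm
  have hσ : StrictMono (K ∘ σ) :=
    (Tuple.monotone_sort (K ∘ ν.symm)).strictMono_of_injective (hKinj.comp σ.injective)
  have hle : ∀ u v, σ.symm u ≤ σ.symm v ↔ K u ≤ K v := by
    intro u v
    rw [← hσ.le_iff_le]; simp
  refine ⟨σ, fun i => σ.symm (f (σ i)), fun i => σ.symm (h (c (σ i))), ?_, ?_, ?_⟩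
  · intro i j hij
    rw [hle]; apply hfmono; rw [← hle]; simpa using hij
  · intro i j hij
    rw [hle]; apply hgmono; rw [← hle]; simpa using hij
  · have key : ∀ i j, i ≠ j → (h (σ i) = σ j ↔ σ.symm (f (σ i)) = j ∨
        (σ.symm (f (σ i)) = i ∧ σ.symm (h (c (σ i))) = j)) := by
      intro i j hij
      simp only [Equiv.symm_apply_eq]
      have hij' : σ i ≠ σ j := fun e => hij (σ.injective e)
      generalize σ i = v at *
      generalize σ j = w at *
      by_cases hcv : c v = v
      · simp [f, hcv, hij']
      · have : h v ≠ v := by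
          intro e
          obtain ⟨i, hi⟩ := hreach v
          rw [Function.iterate_fixed e] at hi
          exact hcv hi.symm
        simp [f, hcv, this]
    intro i j hij
    rw [key i j hij, key j i hij.symm, codeAdj]
    tauto

/-- A monotone `f` is determined by the image of the strictly increasing map `i ↦ i + f i`, a subset
of `Fin (2 * m)`. -/
theorem card_monotone_le (m : ℕ) :
    (Finset.univ.filter (fun f : Fin m → Fin m => Monotone f)).card ≤ 4 ^ m := by
  classical
  let F : (Fin m → Fin m) → Finset (Fin (2 * m)) := fun f =>
    Finset.univ.image fun i => ⟨i + f i, by omega⟩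
  have : Set.InjOn F (Finset.univ.filter (fun f : Fin m → Fin m => Monotone f)) := by
    intro f hf g hg hfg
    have hf' : Monotone f := by simpa using hf
    have hg' : Monotone g := by simpa using hg
    have sm : ∀ f : Fin m → Fin m, Monotone f →
        StrictMono (fun i => (⟨i + f i, by omega⟩ : Fin (2 * m))) := by
      intro f hf i j hij
      have := hf hij.le
      simp only [Fin.lt_def, Fin.le_def] at *
      omega
    have h1 := ((sm f hf').range_inj (sm g hg')).1 (by
      have := congrArg (fun s : Finset (Fin (2 * m)) => (s : Set (Fin (2 * m)))) hfg
      simpa [F] using this)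
    funext i
    have := congrFun h1 i
    simp only [Fin.mk.injEq] at this
    exact Fin.ext (by omega)
  calc _ ≤ (Finset.univ : Finset (Finset (Fin (2 * m)))).card :=
        Finset.card_le_card_of_injOn F (fun _ _ => Finset.mem_univ _) this
    _ = 4 ^ m := by simp [pow_mul]

/-! ### Pseudoforests and their isomorphism classes -/

/-- The set of endpoints of the edges in `S`. -/
def vset {n : ℕ} (S : Finset (Edge n)) : Finset (Fin n) := S.biUnion fun e => e.1.toFinset

/-- No subgraph has more edges than vertices; equivalently, each component has at most one cycle. -/
def PseudoForest {n : ℕ} (H : Finset (Edge n)) : Prop := ∀ S ⊆ H, S.card ≤ (vset S).card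

/-- Adjacency of two vertices in the graph with edge set `H`. -/
def AdjIn {n : ℕ} (H : Finset (Edge n)) (u v : Fin n) : Prop := ∃ e ∈ H, e.1 = s(u, v)

theorem mem_vset {n : ℕ} {S : Finset (Edge n)} {v : Fin n} :
    v ∈ vset S ↔ ∃ e ∈ S, v ∈ e.1 := by simp [vset]

theorem PseudoForest.mono {n : ℕ} {H H' : Finset (Edge n)} (h : H ⊆ H') (h' : PseudoForest H') :
    PseudoForest H := fun S hS => h' S (hS.trans h)

/-- By Hall's theorem the edges of a pseudoforest can be assigned to distinct endpoints. -/
theorem exists_orientation {n : ℕ} {H : Finset (Edge n)} (hH : PseudoForest H) :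
    ∃ φ : Edge n → Fin n, Set.InjOn φ H ∧ ∀ e ∈ H, φ e ∈ e.1 := by
  classical
  obtain ⟨φ, hinj, hφ⟩ := (Finset.all_card_le_biUnion_card_iff_exists_injective
    (fun e : {e // e ∈ H} => e.1.1.toFinset)).1 (by
      intro S
      have h1 := hH (S.map (Function.Embedding.subtype _)) (by
        intro e he
        simp only [Finset.mem_map, Function.Embedding.coe_subtype] at he
        obtain ⟨a, -, rfl⟩ := he
        exact a.2)
      rw [Finset.card_map] at h1
      refine h1.trans (Finset.card_le_card ?_)
      intro v hv
      simp only [vset, Finset.mem_biUnion, Finset.mem_map, Function.Embedding.coe_subtype] at hv ⊢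
      obtain ⟨_, ⟨a, ha, rfl⟩, hv⟩ := hv
      exact ⟨a, ha, hv⟩)
  refine ⟨fun e => if he : e ∈ H then φ ⟨e, he⟩ else e.1.out.1, ?_, ?_⟩
  · intro e he e' he' h
    simp only [Finset.mem_coe] at he he'
    simp only [he, he', dif_pos] at h
    exact congrArg Subtype.val (hinj h)
  · intro e he
    simp only [he, dif_pos]
    exact Sym2.mem_toFinset.1 (hφ ⟨e, he⟩)

/-- Up to relabelling, a pseudoforest is encoded by two monotone maps: the assignment of edges to
distinct endpoints turns it into a functional graph, sending `v` to the other endpoint of the edge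
assigned to it (or to `v` itself if there is none). -/
theorem exists_graph_code {n : ℕ} {H : Finset (Edge n)} (hH : PseudoForest H) :
    ∃ (σ : Fin (vset H).card ≃ {v // v ∈ vset H}) (f g : Fin (vset H).card → Fin (vset H).card),
      Monotone f ∧ Monotone g ∧
      ∀ i j, AdjIn H (σ i) (σ j) ↔ i ≠ j ∧ codeAdj f g i j := by
  classical
  obtain ⟨φ, hinj, hφ⟩ := exists_orientation hH
  have hex : ∀ v : {v // v ∈ vset H}, ∃ w : {v // v ∈ vset H},
      ∀ u : {v // v ∈ vset H}, u ≠ v → ((∃ e ∈ H, φ e = v ∧ e.1 = s(v.1, u.1)) ↔ w = u) := by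
    intro v
    by_cases hv : ∃ e ∈ H, φ e = v
    · obtain ⟨e, he, hev⟩ := hv
      obtain ⟨w, hw⟩ := hev ▸ hφ e he
      refine ⟨⟨w, mem_vset.2 ⟨e, he, by rw [hw]; simp⟩⟩, fun u hu => ?_⟩
      constructor
      · rintro ⟨e', he', hev', hs⟩
        have : e' = e := hinj he' he (hev'.trans hev.symm)
        subst this
        rw [hw, Sym2.congr_right] at hs
        exact Subtype.ext hs
      · rintro rfl
        exact ⟨e, he, hev, hw⟩
    · refine ⟨v, fun u hu => ?_⟩
      constructor
      · rintro ⟨e, he, hev, -⟩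
        exact absurd ⟨e, he, hev⟩ hv
      · exact fun h => absurd h.symm hu
  choose h hh using hex
  have := exists_code h
  rw [Fintype.card_coe] at this
  obtain ⟨σ, f, g, hf, hg, hc⟩ := this
  refine ⟨σ, f, g, hf, hg, fun i j => ?_⟩
  have hne : AdjIn H (σ i) (σ j) → i ≠ j := by
    rintro ⟨e, -, he⟩ rfl
    exact e.2 (by rw [he]; simp)
  by_cases hij : i = j
  · exact ⟨fun h => absurd hij (hne h), fun h => absurd hij h.1⟩
  · have hσ : σ i ≠ σ j := fun e => hij (σ.injective e)
    rw [← hc i j hij, ← hh _ _ hσ.symm, ← hh _ _ hσ]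
    simp only [ne_eq, hij, not_false_eq_true, true_and]
    constructor
    · rintro ⟨e, he, hs⟩
      have := hφ e he
      rw [hs, Sym2.mem_iff] at this
      rcases this with h | h
      · exact Or.inl ⟨e, he, h, hs⟩
      · exact Or.inr ⟨e, he, h, hs.trans Sym2.eq_swap⟩
    · rintro (⟨e, he, -, hs⟩ | ⟨e, he, -, hs⟩)
      · exact ⟨e, he, hs⟩
      · exact ⟨e, he, hs.trans Sym2.eq_swap⟩

theorem card_vset_le {n : ℕ} (H : Finset (Edge n)) : (vset H).card ≤ 2 * H.card := by
  rw [mul_comm]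
  exact Finset.card_biUnion_le_card_mul _ _ _
    fun e _ => (Sym2.card_toFinset_of_not_isDiag e.1 e.2).le

theorem AdjIn.mem_left {n : ℕ} {H : Finset (Edge n)} {u v : Fin n} (h : AdjIn H u v) :
    u ∈ vset H := by
  obtain ⟨e, he, hs⟩ := h
  exact mem_vset.2 ⟨e, he, by rw [hs]; simp⟩

theorem AdjIn.symm {n : ℕ} {H : Finset (Edge n)} {u v : Fin n} (h : AdjIn H u v) :
    AdjIn H v u := by
  obtain ⟨e, he, hs⟩ := h
  exact ⟨e, he, hs.trans Sym2.eq_swap⟩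

/-- Two graphs with the same code are isomorphic through a permutation of all `n` vertices. -/
theorem exists_perm_of_code {n m : ℕ} {H H' : Finset (Edge n)}
    (σ : Fin m ≃ {v // v ∈ vset H}) (σ' : Fin m ≃ {v // v ∈ vset H'}) (R : Fin m → Fin m → Prop)
    (h : ∀ i j, AdjIn H (σ i) (σ j) ↔ R i j) (h' : ∀ i j, AdjIn H' (σ' i) (σ' j) ↔ R i j) :
    ∃ π : Equiv.Perm (Fin n), ∀ e, edgeMap π e ∈ H' ↔ e ∈ H := by
  let ε : {v // v ∈ vset H} ≃ {v // v ∈ vset H'} := σ.symm.trans σ'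
  let π := ε.extendSubtype
  refine ⟨π, ?_⟩
  have hmem : ∀ v, π v ∈ vset H' ↔ v ∈ vset H := fun v =>
    ⟨fun hv => by
      by_contra hc
      exact ε.extendSubtype_not_mem v hc hv, fun hv => ε.extendSubtype_mem v hv⟩
  have key : ∀ u v, AdjIn H' (π u) (π v) ↔ AdjIn H u v := by
    intro u v
    by_cases huv : u ∈ vset H ∧ v ∈ vset H
    · have e1 : π u = σ' (σ.symm ⟨u, huv.1⟩) := ε.extendSubtype_apply_of_mem u huv.1
      have e2 : π v = σ' (σ.symm ⟨v, huv.2⟩) := ε.extendSubtype_apply_of_mem v huv.2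
      rw [e1, e2, h', ← h]
      simp
    · constructor
      · intro hA
        exact absurd ⟨(hmem u).1 hA.mem_left, (hmem v).1 hA.symm.mem_left⟩ huv
      · intro hA
        exact absurd ⟨hA.mem_left, hA.symm.mem_left⟩ huv
  rintro ⟨e, he⟩
  induction e with | _ u v => ?_
  have k := key u v
  constructor
  · intro hm
    obtain ⟨e', he', hs⟩ := k.1 ⟨_, hm, rfl⟩
    rwa [← Subtype.ext (a1 := e') (a2 := ⟨s(u, v), he⟩) hs]
  · intro hm
    obtain ⟨e', he', hs⟩ := k.2 ⟨_, hm, rfl⟩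
    rwa [← Subtype.ext (a1 := e') (a2 := edgeMap π ⟨s(u, v), he⟩) hs]

theorem edgeMap_mul {n : ℕ} (π σ : Equiv.Perm (Fin n)) (e : Edge n) :
    edgeMap (π * σ) e = edgeMap π (edgeMap σ e) := by
  apply Subtype.ext
  simp [edgeMap, Sym2.map_map]

theorem edgeMap_one {n : ℕ} (e : Edge n) : edgeMap 1 e = e := by
  apply Subtype.ext
  simp [edgeMap]

/-- The map `edgeMap π` as a permutation of the edges. -/
def edgePerm {n : ℕ} (π : Equiv.Perm (Fin n)) : Equiv.Perm (Edge n) where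
  toFun := edgeMap π
  invFun := edgeMap π⁻¹
  left_inv e := by rw [← edgeMap_mul, inv_mul_cancel, edgeMap_one]
  right_inv e := by rw [← edgeMap_mul, mul_inv_cancel, edgeMap_one]

/-- The permutation `π` carries the graph `H` to the graph `H'`. -/
def Maps {n : ℕ} (π : Equiv.Perm (Fin n)) (H H' : Finset (Edge n)) : Prop :=
  ∀ e, edgeMap π e ∈ H' ↔ e ∈ H

open Classical in
/-- A consequence of the orbit-stabilizer theorem: the stabilizers of mutually isomorphic graphs have
total size at most `n!`. -/
theorem sum_stabilizer_le {n : ℕ} (C : Finset (Finset (Edge n)))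
    (hC : ∀ H ∈ C, ∀ H' ∈ C, ∃ π : Equiv.Perm (Fin n), Maps π H H') :
    ∑ H ∈ C, (Finset.univ.filter fun π : Equiv.Perm (Fin n) => Maps π H H).card ≤ n.factorial := by
  rcases C.eq_empty_or_nonempty with rfl | ⟨H₀, h₀⟩
  · simp
  have h1 : ∀ H ∈ C, (Finset.univ.filter fun π : Equiv.Perm (Fin n) => Maps π H H).card ≤
      (Finset.univ.filter fun π : Equiv.Perm (Fin n) => Maps π H₀ H).card := by
    intro H hH
    obtain ⟨g, hg⟩ := hC H₀ h₀ H hH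
    refine Finset.card_le_card_of_injOn (fun π => π * g) ?_ (fun _ _ _ _ h => mul_right_cancel h)
    intro π hπ
    simp only [Finset.coe_filter, Finset.mem_univ, true_and, Set.mem_ofPred_eq] at hπ ⊢
    intro e
    rw [edgeMap_mul, hπ, hg]
  refine (Finset.sum_le_sum h1).trans ?_
  rw [← Finset.card_biUnion]
  · refine (Finset.card_le_univ _).trans ?_
    rw [Fintype.card_perm, Fintype.card_fin]
  · intro H _ H' _ hne
    rw [Function.onFun, Finset.disjoint_left]
    intro π hπ hπ'
    simp only [Finset.mem_filter, Finset.mem_univ, true_and] at hπ hπ'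
    apply hne
    ext e
    obtain ⟨e, rfl⟩ := (edgePerm π).surjective e
    exact (hπ e).trans (hπ' e).symm

open Classical in
/-- The sum over `τ` and over `τ`-invariant pseudoforests, grouped by code. There are at most `16^m`
codes on `m` vertices, the graphs with one given code are mutually isomorphic, and having `m`
non-isolated vertices forces at least `m / 2` edges. -/
theorem sum_pseudoForest_le {n : ℕ} {s : ℝ} (hs : 0 ≤ s) (hs1 : s ≤ 1) :
    ∑ τ : Equiv.Perm (Fin n), ∑ H : Finset (Edge n) with PseudoForest H ∧ Maps τ H H,
      s ^ (2 * H.card) ≤ n.factorial * ∑ m ∈ Finset.range (n + 1), (16 * s) ^ m := by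
  simp_rw [Finset.sum_filter, ite_and]
  rw [Finset.sum_comm]
  have e1 : ∀ H : Finset (Edge n), ∑ τ : Equiv.Perm (Fin n),
      (if PseudoForest H then if Maps τ H H then s ^ (2 * H.card) else 0 else 0) =
      if PseudoForest H then
        (Finset.univ.filter fun π : Equiv.Perm (Fin n) => Maps π H H).card * s ^ (2 * H.card)
      else 0 := by
    intro H
    split_ifs
    · rw [← Finset.sum_filter, Finset.sum_const, nsmul_eq_mul]
    · simp
  simp_rw [e1]
  rw [← Finset.sum_filter]
  have hcode : ∀ H : Finset (Edge n), ∃ f g : Fin (vset H).card → Fin (vset H).card,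
      PseudoForest H → Monotone f ∧ Monotone g ∧ ∃ σ : Fin (vset H).card ≃ {v // v ∈ vset H},
        ∀ i j, AdjIn H (σ i) (σ j) ↔ i ≠ j ∧ codeAdj f g i j := by
    intro H
    by_cases hH : PseudoForest H
    · obtain ⟨σ, f, g, hf, hg, h⟩ := exists_graph_code hH
      exact ⟨f, g, fun _ => ⟨hf, hg, σ, h⟩⟩
    · exact ⟨id, id, fun h => absurd h hH⟩
  choose f g hfg using hcode
  let code : Finset (Edge n) → Σ m : ℕ, (Fin m → Fin m) × (Fin m → Fin m) := fun H =>
    ⟨(vset H).card, f H, g H⟩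
  let codes : Finset (Σ m : ℕ, (Fin m → Fin m) × (Fin m → Fin m)) :=
    (Finset.range (n + 1)).sigma fun m =>
      (Finset.univ.filter Monotone) ×ˢ (Finset.univ.filter Monotone)
  have hmaps : ∀ H ∈ Finset.univ.filter (fun H : Finset (Edge n) => PseudoForest H),
      code H ∈ codes := by
    intro H hH
    simp only [Finset.mem_filter, Finset.mem_univ, true_and] at hH
    simp only [code, codes, Finset.mem_sigma, Finset.mem_range, Finset.mem_product,
      Finset.mem_filter, Finset.mem_univ, true_and]
    exact ⟨Nat.lt_succ_of_le (by simpa using Finset.card_le_univ (vset H)), (hfg H hH).1,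
      (hfg H hH).2.1⟩
  rw [← Finset.sum_fiberwise_of_maps_to hmaps]
  have e2 : ∀ κ ∈ codes, ∑ H ∈ Finset.univ.filter (fun H : Finset (Edge n) => PseudoForest H)
      with code H = κ, ((Finset.univ.filter fun π : Equiv.Perm (Fin n) => Maps π H H).card : ℝ) *
        s ^ (2 * H.card) ≤ n.factorial * s ^ κ.1 := by
    intro κ _
    calc _ ≤ ∑ H ∈ Finset.univ.filter (fun H : Finset (Edge n) => PseudoForest H)
      with code H = κ, ((Finset.univ.filter fun π : Equiv.Perm (Fin n) => Maps π H H).card : ℝ) *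
        s ^ κ.1 := by
          refine Finset.sum_le_sum fun H hH => ?_
          simp only [Finset.mem_filter, Finset.mem_univ, true_and] at hH
          gcongr ?_ * ?_
          refine pow_le_pow_of_le_one hs hs1 ?_
          rw [← hH.2]
          exact card_vset_le H
      _ ≤ _ := by
          rw [← Finset.sum_mul]
          gcongr
          have := sum_stabilizer_le (Finset.filter (fun H => code H = κ)
            (Finset.univ.filter (fun H : Finset (Edge n) => PseudoForest H))) (by
              intro H hH H' hH'
              simp only [Finset.mem_filter, Finset.mem_univ, true_and] at hH hH'
              obtain ⟨h1, rfl⟩ := hH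
              obtain ⟨h2, h3⟩ := hH'
              obtain ⟨a, c1⟩ := (hfg H h1).2.2
              obtain ⟨b, c2⟩ := (hfg H' h2).2.2
              simp only [code, Sigma.mk.injEq] at h3
              obtain ⟨h4, h5⟩ := h3
              generalize f H' = f' at *
              generalize g H' = g' at *
              generalize f H = f'' at *
              generalize g H = g'' at *
              generalize (vset H').card = k at *
              subst h4
              obtain ⟨rfl, rfl⟩ := Prod.mk.inj (eq_of_heq h5)
              exact exists_perm_of_code a b _ c1 c2)
          exact_mod_cast this
  refine (Finset.sum_le_sum e2).trans ?_
  rw [← Finset.mul_sum]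
  gcongr
  simp only [codes]
  rw [Finset.sum_sigma]
  refine Finset.sum_le_sum fun m _ => ?_
  simp only [Finset.sum_const, Finset.card_product, nsmul_eq_mul]
  rw [mul_pow]
  gcongr
  have := card_monotone_le m
  have h2 : (Finset.univ.filter (fun f : Fin m → Fin m => Monotone f)).card *
    (Finset.univ.filter (fun f : Fin m → Fin m => Monotone f)).card ≤ 4 ^ m * 4 ^ m :=
      Nat.mul_le_mul this this
  rw [← mul_pow] at h2
  norm_num at h2
  convert (Nat.cast_le (α := ℝ)).2 h2 using 1
  simp

/-! ### Certificates of not being a pseudoforest -/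

/-- The sequence `v a, v 0, v 1, …, v (k - 1), v b`, for `t = 0, …, k + 1`. -/
def zseq {n k : ℕ} (v : Fin k → Fin n) (a b : Fin k) (t : ℕ) : Fin n :=
  if h : 1 ≤ t ∧ t ≤ k then v ⟨t - 1, by omega⟩ else if t = 0 then v a else v b

open Classical in
/-- The edges of the walk `v a, v 0, …, v (k - 1), v b`. If there are `k + 1` of them they certify
that a graph containing them is not a pseudoforest. -/
def certEdges {n k : ℕ} (v : Fin k → Fin n) (a b : Fin k) : Finset (Edge n) :=
  Finset.univ.filter fun e => ∃ t ≤ k, e.1 = s(zseq v a b t, zseq v a b (t + 1))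

/-- A minimal edge set `S` with more edges than vertices is a functional graph on its vertices, with
map `h` and edges `ψ v = {v, h v}`, together with one further edge `e₀`. -/
theorem exists_excess {n : ℕ} {H : Finset (Edge n)} (hH : ¬ PseudoForest H) :
    ∃ S ⊆ H, ∃ e₀ ∈ S, ∃ (ψ : {v // v ∈ vset S} → Edge n)
      (h : {v // v ∈ vset S} → {v // v ∈ vset S}),
      Function.Injective ψ ∧ ∀ v, ψ v ∈ S ∧ ψ v ≠ e₀ ∧ (ψ v).1 = s(v.1, (h v).1) := by
  classical
  simp only [PseudoForest, not_forall, not_le] at hH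
  obtain ⟨S₁, hS₁, hc₁⟩ := hH
  obtain ⟨S, hS, hmin⟩ := Finset.exists_min_image
    (H.powerset.filter fun S => (vset S).card < S.card) Finset.card
    ⟨S₁, by simp [hS₁, hc₁]⟩
  simp only [Finset.mem_filter, Finset.mem_powerset] at hS hmin
  obtain ⟨hSH, hcard⟩ := hS
  obtain ⟨e₀, he₀⟩ : S.Nonempty := Finset.card_pos.1 (by omega)
  have hcE : (S.erase e₀).card = S.card - 1 := Finset.card_erase_of_mem he₀
  have hpf : PseudoForest (S.erase e₀) := by
    intro T hT
    by_contra! hlt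
    have h1 := hmin T ⟨(hT.trans (Finset.erase_subset _ _)).trans hSH, hlt⟩
    have h2 := Finset.card_le_card hT
    omega
  obtain ⟨φ, hinj, hφ⟩ := exists_orientation hpf
  have hmaps : ∀ e ∈ S.erase e₀, φ e ∈ vset S := fun e he =>
    mem_vset.2 ⟨e, Finset.mem_of_mem_erase he, hφ e he⟩
  have hsurj := Finset.surjOn_of_injOn_of_card_le φ hmaps hinj (by omega)
  have hex : ∀ v : {v // v ∈ vset S}, ∃ (e : Edge n) (w : {v // v ∈ vset S}),
      φ e = v ∧ e ∈ S ∧ e ≠ e₀ ∧ e.1 = s(v.1, w.1) := by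
    intro v
    obtain ⟨e, he, hev⟩ := hsurj v.2
    obtain ⟨w, hw⟩ := hev ▸ hφ e he
    have heS := Finset.mem_of_mem_erase he
    exact ⟨e, ⟨w, mem_vset.2 ⟨e, heS, by rw [hw]; simp⟩⟩, hev, heS, Finset.ne_of_mem_erase he, hw⟩
  choose ψ h h1 h2 using hex
  refine ⟨S, hSH, e₀, he₀, ψ, h, fun u v huv => ?_, h2⟩
  apply Subtype.ext
  rw [← h1 u, ← h1 v, huv]

/-- A graph that is not a pseudoforest contains a certificate: start from the two endpoints `x`, `y`
of the excess edge and follow the functional graph until each trajectory first repeats a vertex. -/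
theorem exists_cert {n : ℕ} {H : Finset (Edge n)} (hH : ¬ PseudoForest H) :
    ∃ k ≤ n, ∃ (v : Fin k → Fin n) (a b : Fin k),
      certEdges v a b ⊆ H ∧ k + 1 ≤ (certEdges v a b).card := by
  classical
  obtain ⟨S, hSH, e₀, he₀, ψ, h, hψ, hh⟩ := exists_excess hH
  obtain ⟨x, y, hx, hy, hxy⟩ : ∃ x y, x ∈ vset S ∧ y ∈ vset S ∧ e₀.1 = s(x, y) := by
    have key : ∀ v ∈ e₀.1, v ∈ vset S := fun v hv => mem_vset.2 ⟨e₀, he₀, hv⟩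
    revert key
    induction e₀.1 with | _ x y => ?_
    exact fun key => ⟨x, y, key x (by simp), key y (by simp), rfl⟩
  let X : ℕ → {v // v ∈ vset S} := fun t => h^[t] ⟨x, hx⟩
  let Y : ℕ → {v // v ∈ vset S} := fun t => h^[t] ⟨y, hy⟩
  have hX : ∀ t, X (t + 1) = h (X t) := fun t => Function.iterate_succ_apply' h t _
  have hY : ∀ t, Y (t + 1) = h (Y t) := fun t => Function.iterate_succ_apply' h t _
  have rep : ∀ Z : ℕ → {v // v ∈ vset S}, ∃ I, ∃ t < I, Z I = Z t := by
    intro Z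
    obtain ⟨i, j, hij, e⟩ := Finite.exists_ne_map_eq_of_infinite Z
    rcases lt_or_gt_of_ne hij with h1 | h1
    · exact ⟨j, i, h1, e.symm⟩
    · exact ⟨i, j, h1, e⟩
  -- `I` is the first time the trajectory of `x` repeats itself, and `J` the first time the
  -- trajectory of `y` meets that of `x` or itself.
  obtain ⟨I, ⟨tx, htx, hIx⟩, hImin⟩ : ∃ I, (∃ t < I, X I = X t) ∧
      ∀ i < I, ∀ t < i, X i ≠ X t :=
    ⟨Nat.find (rep X), Nat.find_spec (rep X), fun i hi t ht e =>
      Nat.find_min (rep X) hi ⟨t, ht, e⟩⟩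
  have repY : ∃ J, (∃ t < I, Y J = X t) ∨ ∃ t < J, Y J = Y t := by
    obtain ⟨J, hJ⟩ := rep Y
    exact ⟨J, Or.inr hJ⟩
  obtain ⟨J, hJ, hJmin⟩ : ∃ J, ((∃ t < I, Y J = X t) ∨ ∃ t < J, Y J = Y t) ∧
      ∀ j < J, (∀ t < I, Y j ≠ X t) ∧ ∀ t < j, Y j ≠ Y t := by
    refine ⟨Nat.find repY, Nat.find_spec repY, fun j hj => ?_⟩
    have := Nat.find_min repY hj
    push Not at this
    exact this
  -- The walk `X I, …, X 0 = x, y = Y 0, …, Y J`; only its first and last entry are repetitions.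
  let Z : ℕ → {v // v ∈ vset S} := fun t => if t ≤ I then X (I - t) else Y (t - I - 1)
  have hZinj : ∀ t t', 1 ≤ t → t < t' → t' ≤ I + J → Z t' ≠ Z t := by
    intro t t' h1 h2 h3
    by_cases c1 : t' ≤ I
    · have c2 : t ≤ I := by omega
      simp only [Z, c1, c2, if_true]
      exact (hImin (I - t) (by omega) (I - t') (by omega)).symm
    · by_cases c2 : t ≤ I
      · simp only [Z, c1, c2, if_true, if_false]
        exact (hJmin (t' - I - 1) (by omega)).1 (I - t) (by omega)
      · simp only [Z, c1, c2, if_false]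
        exact (hJmin (t' - I - 1) (by omega)).2 (t - I - 1) (by omega)
  have hZinj' : ∀ t t', 1 ≤ t → t ≤ I + J → 1 ≤ t' → t' ≤ I + J → Z t = Z t' → t = t' := by
    intro t t' h1 h2 h3 h4 h5
    rcases lt_trichotomy t t' with h | h | h
    · exact absurd h5.symm (hZinj t t' h1 h h4)
    · exact h
    · exact absurd h5 (hZinj t' t h3 h h2)
  let v : Fin (I + J) → Fin n := fun i => (Z (i + 1)).1
  have hvinj : Function.Injective v := by
    intro i j hij
    have := hZinj' (i + 1) (j + 1) (by omega) (by omega) (by omega) (by omega) (Subtype.ext hij)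
    exact Fin.ext (by omega)
  obtain ⟨a, ha⟩ : ∃ a, v a = (Z 0).1 := by
    refine ⟨⟨I - tx - 1, by omega⟩, ?_⟩
    have : I - (I - tx - 1 + 1) = tx := by omega
    have c : I - tx - 1 + 1 ≤ I := by omega
    simp only [v, Z, c, if_true, this, Nat.zero_le, Nat.sub_zero, hIx]
  obtain ⟨b, hb⟩ : ∃ b, v b = (Z (I + J + 1)).1 := by
    have hlast : Z (I + J + 1) = Y J := by
      have c : ¬ (I + J + 1 ≤ I) := by omega
      simp only [Z, c, if_false]
      congr 1; omega
    rw [hlast]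
    rcases hJ with ⟨t, ht, e⟩ | ⟨t, ht, e⟩
    · refine ⟨⟨I - t - 1, by omega⟩, ?_⟩
      have : I - (I - t - 1 + 1) = t := by omega
      have c : I - t - 1 + 1 ≤ I := by omega
      simp only [v, Z, c, if_true, this, e]
    · refine ⟨⟨I + t, by omega⟩, ?_⟩
      have : I + t + 1 - I - 1 = t := by omega
      have c : ¬ (I + t + 1 ≤ I) := by omega
      simp only [v, Z, c, if_false, this, e]
  have hz : ∀ t ≤ I + J + 1, zseq v a b t = (Z t).1 := by
    intro t ht
    unfold zseq
    split_ifs with c1 c2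
    · simp only [v]
      congr 2; omega
    · rw [ha, c2]
    · rw [hb]
      congr 2; omega
  -- The edge between `Z t` and `Z (t + 1)`; the edge `e₀` is used at `t = I`.
  let E : ℕ → Edge n := fun t =>
    if t < I then ψ (Z (t + 1)) else if t = I then e₀ else ψ (Z t)
  have hES : ∀ t, E t ∈ S := by
    intro t
    simp only [E]
    split_ifs
    · exact (hh _).1
    · exact he₀
    · exact (hh _).1
  have hEz : ∀ t, (E t).1 = s((Z t).1, (Z (t + 1)).1) := by
    intro t
    simp only [E]
    split_ifs with c1 c2
    · rw [(hh _).2.2, Sym2.eq_swap]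
      have : Z t = h (Z (t + 1)) := by
        have d1 : t ≤ I := by omega
        have d2 : t + 1 ≤ I := by omega
        simp only [Z, d1, d2, if_true]
        rw [← hX]
        congr 1; omega
      rw [this]
    · subst c2
      have d2 : ¬ (t + 1 ≤ t) := by omega
      have d3 : t + 1 - t - 1 = 0 := by omega
      simp only [Z, d2, le_refl, if_true, if_false, Nat.sub_self, d3]
      exact hxy
    · rw [(hh _).2.2]
      have : Z (t + 1) = h (Z t) := by
        have d1 : ¬ t ≤ I := by omega
        have d2 : ¬ t + 1 ≤ I := by omega
        simp only [Z, d1, d2, if_false]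
        rw [← hY]
        congr 1; omega
      rw [this]
  have hEinj : Function.Injective (fun t : Fin (I + J + 1) => E t) := by
    rintro ⟨t, ht⟩ ⟨t', ht'⟩ e
    apply Fin.ext
    simp only [E] at e ⊢
    split_ifs at e with c1 c2 c3 c4 c5 c6 c7 c8
    · have := hZinj' _ _ (by omega) (by omega) (by omega) (by omega) (hψ e); omega
    · exact absurd e (hh _).2.1
    · have := hZinj' _ _ (by omega) (by omega) (by omega) (by omega) (hψ e); omega
    · exact absurd e.symm (hh _).2.1
    · omega
    · exact absurd e.symm (hh _).2.1
    · have := hZinj' _ _ (by omega) (by omega) (by omega) (by omega) (hψ e); omega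
    · exact absurd e (hh _).2.1
    · have := hZinj' _ _ (by omega) (by omega) (by omega) (by omega) (hψ e); omega
  refine ⟨I + J, by simpa using Fintype.card_le_of_injective v hvinj, v, a, b, ?_, ?_⟩
  · intro e he
    simp only [certEdges, Finset.mem_filter, Finset.mem_univ, true_and] at he
    obtain ⟨t, ht, e1⟩ := he
    rw [hz t (by omega), hz (t + 1) (by omega), ← hEz] at e1
    rw [Subtype.ext e1]
    exact hSH (hES t)
  · have hsub : Finset.univ.image (fun t : Fin (I + J + 1) => E t) ⊆ certEdges v a b := by
      intro e he
      simp only [Finset.mem_image, Finset.mem_univ, true_and] at he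
      obtain ⟨t, rfl⟩ := he
      simp only [certEdges, Finset.mem_filter, Finset.mem_univ, true_and]
      refine ⟨t, by omega, ?_⟩
      rw [hz t (by omega), hz (t + 1) (by omega), ← hEz]
    have := Finset.card_le_card hsub
    rwa [Finset.card_image_of_injective _ hEinj, Finset.card_univ, Fintype.card_fin] at this

/-! ### The truncated second moment method -/

theorem jw_nonneg {p s : ℝ} (hp : 0 ≤ p) (hp1 : p ≤ 1) (hs : 0 ≤ s) (hs1 : s ≤ 1) (a b : Bool) :
    0 ≤ jw p s a b := by
  have h2 : 0 ≤ 1 - s := by linarith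
  have h3 : 0 ≤ 1 - 2 * (p * s) + p * s ^ 2 := by nlinarith [mul_nonneg hp (sq_nonneg (1 - s))]
  rcases a <;> rcases b <;> simp [jw] <;> positivity

/-- The intersection graph contains a given edge set `S` with probability `q^|S|`. -/
theorem sum_contains {E : Type*} [Fintype E] [DecidableEq E] (p s : ℝ) (S : Finset E) :
    ∑ X : E → Bool × Bool with S ⊆ (Finset.univ.filter fun e => X e = (true, true)),
      ∏ e, jw p s (X e).1 (X e).2 = (p * s ^ 2) ^ S.card := by
  rw [Finset.sum_filter]
  have : ∀ X : E → Bool × Bool,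
      (if S ⊆ (Finset.univ.filter fun e => X e = (true, true)) then
        ∏ e, jw p s (X e).1 (X e).2 else 0) =
      ∏ e, if e ∈ S → X e = (true, true) then jw p s (X e).1 (X e).2 else 0 := by
    intro X
    split_ifs with h
    · refine Finset.prod_congr rfl fun e _ => ?_
      rw [if_pos]
      intro he
      simpa using h he
    · obtain ⟨e, he, hX⟩ := Finset.not_subset.1 h
      symm
      apply Finset.prod_eq_zero (Finset.mem_univ e)
      rw [if_neg]
      intro hc
      exact hX (by simpa using hc he)
  simp_rw [this]
  rw [sum_prod_pi (fun (e : E) (x : Bool × Bool) =>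
    if e ∈ S → x = (true, true) then jw p s x.1 x.2 else 0)]
  have : ∀ e, (∑ x : Bool × Bool, if e ∈ S → x = (true, true) then jw p s x.1 x.2 else 0) =
      if e ∈ S then p * s ^ 2 else 1 := by
    intro e
    by_cases he : e ∈ S
    · simp [he, jw]
    · simp [he, jw, Fintype.sum_prod_type]; ring
  simp_rw [this]
  simp

open Classical in
/-- Union bound over the `k² n^k` possible certificates on `k` vertices. -/
theorem bad_mass_le {n : ℕ} {p s : ℝ} (hp : 0 ≤ p) (hp1 : p ≤ 1) (hs : 0 ≤ s) (hs1 : s ≤ 1) :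
    ∑ X : Edge n → Bool × Bool with
        ¬ PseudoForest (Finset.univ.filter fun e => X e = (true, true)),
      ∏ e, jw p s (X e).1 (X e).2 ≤
    ∑ k ∈ Finset.range (n + 1), (k : ℝ) ^ 2 * n ^ k * (p * s ^ 2) ^ (k + 1) := by
  let ok : (Σ k : ℕ, (Fin k → Fin n) × Fin k × Fin k) → Prop := fun c =>
    c.1 + 1 ≤ (certEdges c.2.1 c.2.2.1 c.2.2.2).card
  let ed : (Σ k : ℕ, (Fin k → Fin n) × Fin k × Fin k) → Finset (Edge n) := fun c =>
    certEdges c.2.1 c.2.2.1 c.2.2.2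
  let certs : Finset (Σ k : ℕ, (Fin k → Fin n) × Fin k × Fin k) :=
    (Finset.range (n + 1)).sigma fun k => Finset.univ
  have hq1 : p * s ^ 2 ≤ 1 := mul_le_one₀ hp1 (by positivity) (pow_le_one₀ hs hs1)
  have hw : ∀ X : Edge n → Bool × Bool, 0 ≤ ∏ e, jw p s (X e).1 (X e).2 := fun X =>
    Finset.prod_nonneg fun e _ => jw_nonneg hp hp1 hs hs1 _ _
  calc _ ≤ ∑ X : Edge n → Bool × Bool, ∑ c ∈ certs,
        (if ok c ∧ ed c ⊆ (Finset.univ.filter fun e => X e = (true, true)) then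
          ∏ e, jw p s (X e).1 (X e).2 else 0) := by
        rw [Finset.sum_filter]
        refine Finset.sum_le_sum fun X _ => ?_
        have hnn : ∀ c ∈ certs,
          0 ≤ (if ok c ∧ ed c ⊆ (Finset.univ.filter fun e => X e = (true, true)) then
            ∏ e, jw p s (X e).1 (X e).2 else 0) := by
          intro c _
          split_ifs
          · exact hw X
          · exact le_rfl
        split_ifs with hX
        · exact Finset.sum_nonneg hnn
        · obtain ⟨k, hk, v, a, b, h1, h2⟩ := exists_cert hX
          have hc : (⟨k, v, a, b⟩ : Σ k : ℕ, (Fin k → Fin n) × Fin k × Fin k) ∈ certs := by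
            simp only [certs, Finset.mem_sigma, Finset.mem_range, Finset.mem_univ, and_true]
            omega
          refine le_trans (le_of_eq ?_) (Finset.single_le_sum hnn hc)
          rw [if_pos ⟨h2, h1⟩]
    _ = ∑ c ∈ certs, if ok c then (p * s ^ 2) ^ (ed c).card else 0 := by
        rw [Finset.sum_comm]
        refine Finset.sum_congr rfl fun c _ => ?_
        split_ifs with h
        · simp only [h, true_and]
          rw [← sum_contains p s (ed c), Finset.sum_filter]
        · simp [h]
    _ ≤ ∑ c ∈ certs, (p * s ^ 2) ^ (c.1 + 1) := by
        refine Finset.sum_le_sum fun c _ => ?_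
        split_ifs with h
        · exact pow_le_pow_of_le_one (by positivity) hq1 h
        · positivity
    _ = _ := by
        simp only [certs]
        rw [Finset.sum_sigma]
        refine Finset.sum_congr rfl fun k _ => ?_
        simp only [Finset.sum_const, Finset.card_univ, Fintype.card_prod, Fintype.card_fun,
          Fintype.card_fin, nsmul_eq_mul]
        push_cast
        ring

theorem edgePerm_apply {n : ℕ} (π : Equiv.Perm (Fin n)) (e : Edge n) :
    edgePerm π e = edgeMap π e := rfl

/-- The weight of `(A, B)` under the null law. -/
def qW {n : ℕ} (p s : ℝ) (A B : Edge n → Bool) : ℝ :=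
  (∏ e, bw (p * s) (A e)) * ∏ e, bw (p * s) (B e)

/-- The weight of `(A, B)` under the planted law, conditionally on the permutation `π`. -/
def pW {n : ℕ} (p s : ℝ) (π : Equiv.Perm (Fin n)) (A B : Edge n → Bool) : ℝ :=
  ∏ e, jw p s (A e) (B (edgePerm π e))

/-- The intersection graph of `A` and `B`. -/
def inter {n : ℕ} (A B : Edge n → Bool) : Finset (Edge n) :=
  Finset.univ.filter fun e => (A e, B e) = (true, true)

/-- Relabelling `B` by `π` is a bijection, so it can be undone in a sum over all `(A, B)`. -/
theorem sum_twist {n : ℕ} (π : Equiv.Perm (Fin n)) (F : (Edge n → Bool) → (Edge n → Bool) → ℝ) :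
    ∑ ω : (Edge n → Bool) × (Edge n → Bool), F ω.1 (fun e => ω.2 (edgePerm π e)) =
      ∑ X : Edge n → Bool × Bool, F (fun e => (X e).1) (fun e => (X e).2) := by
  rw [← (Equiv.arrowProdEquivProdArrow (Edge n) (fun _ => Bool) (fun _ => Bool)).symm.sum_comp,
    Fintype.sum_prod_type, Fintype.sum_prod_type]
  refine Finset.sum_congr rfl fun A _ => ?_
  exact Fintype.sum_equiv (Equiv.arrowCongr (edgePerm π).symm (Equiv.refl Bool)) _ _ fun B => rfl

open Classical in
/-- The weight `pW`, truncated to the event that the intersection graph, after undoing `π`, is a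
pseudoforest. -/
def ptW {n : ℕ} (p s : ℝ) (π : Equiv.Perm (Fin n)) (A B : Edge n → Bool) : ℝ :=
  if PseudoForest (inter A fun e => B (edgePerm π e)) then pW p s π A B else 0

theorem sum_pW {n : ℕ} (p s : ℝ) (π : Equiv.Perm (Fin n)) :
    ∑ ω : (Edge n → Bool) × (Edge n → Bool), pW p s π ω.1 ω.2 = 1 := by
  have h := sum_twist π (fun A B => ∏ e, jw p s (A e) (B e))
  have h2 := sum_contains p s (∅ : Finset (Edge n))
  simp only [Finset.empty_subset, Finset.filter_true, Finset.card_empty, pow_zero] at h2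
  simp only [pW]
  exact h.trans h2

theorem sum_qW {n : ℕ} (p s : ℝ) :
    ∑ ω : (Edge n → Bool) × (Edge n → Bool), qW p s ω.1 ω.2 = 1 := by
  have h : ∑ A : Edge n → Bool, ∏ e, bw (p * s) (A e) = 1 := by
    rw [sum_prod_pi (fun (e : Edge n) b => bw (p * s) b)]
    simp [bw]
  simp only [qW]
  rw [Fintype.sum_prod_type]
  simp_rw [← Finset.mul_sum, h]
  simpa using h

theorem sum_pW_sub_ptW {n : ℕ} {p s : ℝ} (hp : 0 ≤ p) (hp1 : p ≤ 1) (hs : 0 ≤ s) (hs1 : s ≤ 1)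
    (π : Equiv.Perm (Fin n)) :
    ∑ ω : (Edge n → Bool) × (Edge n → Bool), (pW p s π ω.1 ω.2 - ptW p s π ω.1 ω.2) ≤
    ∑ k ∈ Finset.range (n + 1), (k : ℝ) ^ 2 * n ^ k * (p * s ^ 2) ^ (k + 1) := by
  classical
  refine le_trans (le_of_eq ?_) (bad_mass_le hp hp1 hs hs1)
  have h := sum_twist π (fun A B =>
    if ¬ PseudoForest (inter A B) then ∏ e, jw p s (A e) (B e) else 0)
  rw [Finset.sum_filter]
  refine Eq.trans ?_ (h.trans ?_)
  · refine Finset.sum_congr rfl fun ω _ => ?_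
    simp only [ptW, pW]
    split_ifs <;> simp
  · rfl

/-- The contribution of two permutations to the second moment. Truncating for `π` only suffices. -/
theorem second_moment_pair {n : ℕ} {p s : ℝ} (hp : 0 < p) (hp1 : p < 1) (hs : 0 < s) (hs1 : s ≤ 1)
    (π σ : Equiv.Perm (Fin n)) [DecidablePred fun H : Finset (Edge n) =>
      PseudoForest H ∧ Maps (π⁻¹ * σ) H H] :
    ∑ ω : (Edge n → Bool) × (Edge n → Bool), ptW p s π ω.1 ω.2 * ptW p s σ ω.1 ω.2 /
        qW p s ω.1 ω.2 ≤
      ∑ H : Finset (Edge n) with PseudoForest H ∧ Maps (π⁻¹ * σ) H H, s ^ (2 * H.card) := by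
  classical
  have h1 : 0 < 1 - p * s := by nlinarith
  have h0 : 0 < p * s := by positivity
  have hq : ∀ b, 0 < bw (p * s) b := by intro b; rcases b <;> simp [bw] <;> linarith
  let F : (Edge n → Bool) → (Edge n → Bool) → ℝ := fun A B =>
    if PseudoForest (inter A B) then
      ∏ e, uw p s (A e, B e) (B (edgePerm (π⁻¹ * σ) e)) else 0
  have hpn : ∀ π : Equiv.Perm (Fin n), ∀ A B, 0 ≤ pW p s π A B := fun π A B =>
    Finset.prod_nonneg fun e _ => jw_nonneg hp.le hp1.le hs.le hs1 _ _
  calc _ ≤ ∑ ω : (Edge n → Bool) × (Edge n → Bool), F ω.1 (fun e => ω.2 (edgePerm π e)) := by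
        refine Finset.sum_le_sum fun ω _ => ?_
        obtain ⟨A, B⟩ := ω
        have hqn : 0 ≤ qW p s A B := mul_nonneg (Finset.prod_nonneg fun e _ => (hq _).le)
          (Finset.prod_nonneg fun e _ => (hq _).le)
        have hle : ptW p s σ A B ≤ pW p s σ A B := by
          simp only [ptW]
          split_ifs
          · exact le_rfl
          · exact hpn _ _ _
        simp only [F]
        split_ifs with hA
        · have e1 : ptW p s π A B = pW p s π A B := by simp only [ptW, hA, if_true]
          rw [e1]
          refine (div_le_div_of_nonneg_right (mul_le_mul_of_nonneg_left hle (hpn _ _ _)) hqn).trans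
            (le_of_eq ?_)
          simp only [uw]
          rw [Finset.prod_div_distrib, Finset.prod_mul_distrib, Finset.prod_mul_distrib,
            Equiv.prod_comp (edgePerm π) (fun e => bw (p * s) (B e))]
          have e2 : ∀ e, edgePerm π (edgePerm (π⁻¹ * σ) e) = edgePerm σ e := by
            intro e
            show edgeMap π (edgeMap (π⁻¹ * σ) e) = edgeMap σ e
            rw [← edgeMap_mul, mul_inv_cancel_left]
          simp only [e2]
          rfl
        · simp only [ptW, hA, if_false, zero_mul, zero_div, le_refl]
    _ = ∑ X : Edge n → Bool × Bool with
        PseudoForest (Finset.univ.filter fun e => X e = (true, true)),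
        ∏ e, uw p s (X e) (X (edgePerm (π⁻¹ * σ) e)).2 := by
        refine (sum_twist π F).trans ?_
        rw [Finset.sum_filter]
        refine Finset.sum_congr rfl fun X _ => ?_
        simp only [F, inter, Prod.mk.eta]
    _ ≤ _ := by
        have h := trunc_sum_le (edgePerm (π⁻¹ * σ)) hp hp1 hs hs1 PseudoForest
          (fun S T h => PseudoForest.mono h)
        refine le_trans (le_of_eq ?_) (h.trans (le_of_eq ?_))
        · congr!
        · refine Finset.sum_congr (Finset.ext fun H => ?_) fun _ _ => rfl
          exact (@Finset.mem_filter _ _ (_) _ _).trans (Iff.trans Iff.rfl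
            (@Finset.mem_filter _ (fun H => PseudoForest H ∧ Maps (π⁻¹ * σ) H H) (_) _ _).symm)

/-- The weight of `(A, B)` under the planted law. -/
def pM {n : ℕ} (p s : ℝ) (A B : Edge n → Bool) : ℝ :=
  (n.factorial : ℝ)⁻¹ * ∑ π : Equiv.Perm (Fin n), pW p s π A B

/-- The truncated planted weight. -/
def ptM {n : ℕ} (p s : ℝ) (A B : Edge n → Bool) : ℝ :=
  (n.factorial : ℝ)⁻¹ * ∑ π : Equiv.Perm (Fin n), ptW p s π A B

/-- The second moment of the truncated planted law relative to the null law. -/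
theorem second_moment {n : ℕ} {p s : ℝ} (hp : 0 < p) (hp1 : p < 1) (hs : 0 < s) (hs1 : s ≤ 1) :
    ∑ ω : (Edge n → Bool) × (Edge n → Bool), ptM p s ω.1 ω.2 ^ 2 / qW p s ω.1 ω.2 ≤
      ∑ m ∈ Finset.range (n + 1), (16 * s) ^ m := by
  classical
  have hN : (0 : ℝ) < n.factorial := by exact_mod_cast n.factorial_pos
  have e1 : ∑ ω : (Edge n → Bool) × (Edge n → Bool), ptM p s ω.1 ω.2 ^ 2 / qW p s ω.1 ω.2 =
      (n.factorial : ℝ)⁻¹ ^ 2 * ∑ π : Equiv.Perm (Fin n), ∑ σ : Equiv.Perm (Fin n),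
        ∑ ω : (Edge n → Bool) × (Edge n → Bool), ptW p s π ω.1 ω.2 * ptW p s σ ω.1 ω.2 /
          qW p s ω.1 ω.2 := by
    have : ∀ ω : (Edge n → Bool) × (Edge n → Bool), ptM p s ω.1 ω.2 ^ 2 / qW p s ω.1 ω.2 =
        (n.factorial : ℝ)⁻¹ ^ 2 * ∑ π : Equiv.Perm (Fin n), ∑ σ : Equiv.Perm (Fin n),
          ptW p s π ω.1 ω.2 * ptW p s σ ω.1 ω.2 / qW p s ω.1 ω.2 := by
      intro ω
      simp_rw [← Finset.sum_div]
      rw [← Finset.sum_mul_sum, ptM]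
      ring
    simp_rw [this]
    rw [← Finset.mul_sum, Finset.sum_comm]
    congr 1
    refine Finset.sum_congr rfl fun π _ => ?_
    rw [Finset.sum_comm]
  rw [e1]
  have e2 : ∑ π : Equiv.Perm (Fin n), ∑ σ : Equiv.Perm (Fin n),
        ∑ ω : (Edge n → Bool) × (Edge n → Bool), ptW p s π ω.1 ω.2 * ptW p s σ ω.1 ω.2 /
          qW p s ω.1 ω.2 ≤
      ∑ π : Equiv.Perm (Fin n), (n.factorial * ∑ m ∈ Finset.range (n + 1), (16 * s) ^ m) := by
    refine Finset.sum_le_sum fun π _ => ?_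
    refine le_trans ?_ (sum_pseudoForest_le (n := n) hs.le hs1)
    rw [← Equiv.sum_comp (Equiv.mulLeft π⁻¹) (fun τ => ∑ H : Finset (Edge n) with
      PseudoForest H ∧ Maps τ H H, s ^ (2 * H.card))]
    exact Finset.sum_le_sum fun σ _ => second_moment_pair hp hp1 hs hs1 π σ
  refine (mul_le_mul_of_nonneg_left e2 (by positivity)).trans (le_of_eq ?_)
  rw [Finset.sum_const, Finset.card_univ, Fintype.card_perm, Fintype.card_fin, nsmul_eq_mul]
  field_simp

/-- Truncation costs at most `ε` in `ℓ¹`, and by Cauchy-Schwarz the truncated weight is within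
`√(M - 1 + 2 ε)` of the null weight. -/
theorem l1_bound {n : ℕ} {p s : ℝ} (hp : 0 < p) (hp1 : p < 1) (hs : 0 < s) (hs1 : s ≤ 1)
    {ε M : ℝ}
    (hε : ∑ k ∈ Finset.range (n + 1), (k : ℝ) ^ 2 * n ^ k * (p * s ^ 2) ^ (k + 1) ≤ ε)
    (hM : ∑ m ∈ Finset.range (n + 1), (16 * s) ^ m ≤ M) :
    ∑ ω : (Edge n → Bool) × (Edge n → Bool), |pM p s ω.1 ω.2 - qW p s ω.1 ω.2| ≤
      ε + Real.sqrt (M - 1 + 2 * ε) := by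
  have h1 : 0 < 1 - p * s := by nlinarith
  have h0 : 0 < p * s := by positivity
  have hN : (0 : ℝ) < n.factorial := by exact_mod_cast n.factorial_pos
  have hb : ∀ b, 0 < bw (p * s) b := by intro b; rcases b <;> simp [bw] <;> linarith
  have hq : ∀ ω : (Edge n → Bool) × (Edge n → Bool), 0 < qW p s ω.1 ω.2 := fun ω =>
    mul_pos (Finset.prod_pos fun e _ => hb _) (Finset.prod_pos fun e _ => hb _)
  have hpt : ∀ ω : (Edge n → Bool) × (Edge n → Bool), ptM p s ω.1 ω.2 ≤ pM p s ω.1 ω.2 := by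
    intro ω
    unfold ptM pM
    gcongr with π
    simp only [ptW]
    split_ifs
    · exact le_rfl
    · exact Finset.prod_nonneg fun e _ => jw_nonneg hp.le hp1.le hs.le hs1 _ _
  have hpM : ∑ ω : (Edge n → Bool) × (Edge n → Bool), pM p s ω.1 ω.2 = 1 := by
    unfold pM
    rw [← Finset.mul_sum, Finset.sum_comm]
    simp_rw [sum_pW]
    rw [Finset.sum_const, Finset.card_univ, Fintype.card_perm, Fintype.card_fin, nsmul_eq_mul]
    field_simp
  have hdiff : ∑ ω : (Edge n → Bool) × (Edge n → Bool), (pM p s ω.1 ω.2 - ptM p s ω.1 ω.2) ≤ ε := by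
    have : ∀ ω : (Edge n → Bool) × (Edge n → Bool), pM p s ω.1 ω.2 - ptM p s ω.1 ω.2 =
        (n.factorial : ℝ)⁻¹ * ∑ π : Equiv.Perm (Fin n),
          (pW p s π ω.1 ω.2 - ptW p s π ω.1 ω.2) := by
      intro ω
      rw [pM, ptM, ← mul_sub, Finset.sum_sub_distrib]
    simp_rw [this]
    rw [← Finset.mul_sum, Finset.sum_comm]
    have h3 : ∑ π : Equiv.Perm (Fin n), ∑ ω : (Edge n → Bool) × (Edge n → Bool),
        (pW p s π ω.1 ω.2 - ptW p s π ω.1 ω.2) ≤ ∑ π : Equiv.Perm (Fin n), ε :=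
      Finset.sum_le_sum fun π _ => (sum_pW_sub_ptW hp.le hp1.le hs.le hs1 π).trans hε
    refine (mul_le_mul_of_nonneg_left h3 (by positivity)).trans (le_of_eq ?_)
    rw [Finset.sum_const, Finset.card_univ, Fintype.card_perm, Fintype.card_fin, nsmul_eq_mul]
    field_simp
  have hcs : (∑ ω : (Edge n → Bool) × (Edge n → Bool), |ptM p s ω.1 ω.2 - qW p s ω.1 ω.2|) ^ 2 ≤
      M - 1 + 2 * ε := by
    have h2 := Finset.sum_sq_le_sum_mul_sum_of_sq_le_mul Finset.univ
      (r := fun ω : (Edge n → Bool) × (Edge n → Bool) => |ptM p s ω.1 ω.2 - qW p s ω.1 ω.2|)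
      (f := fun ω => (ptM p s ω.1 ω.2 - qW p s ω.1 ω.2) ^ 2 / qW p s ω.1 ω.2)
      (g := fun ω => qW p s ω.1 ω.2)
      (fun ω _ => div_nonneg (sq_nonneg _) (hq ω).le) (fun ω _ => (hq ω).le)
      (fun ω _ => by rw [sq_abs, div_mul_cancel₀ _ (hq ω).ne'])
    refine h2.trans ?_
    rw [sum_qW, mul_one]
    have h3 : ∀ ω : (Edge n → Bool) × (Edge n → Bool),
        (ptM p s ω.1 ω.2 - qW p s ω.1 ω.2) ^ 2 / qW p s ω.1 ω.2 =
        ptM p s ω.1 ω.2 ^ 2 / qW p s ω.1 ω.2 - 2 * pM p s ω.1 ω.2 +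
          2 * (pM p s ω.1 ω.2 - ptM p s ω.1 ω.2) + qW p s ω.1 ω.2 := by
      intro ω
      have := (hq ω).ne'
      field_simp
      ring
    simp_rw [h3]
    rw [Finset.sum_add_distrib, Finset.sum_add_distrib, Finset.sum_sub_distrib, ← Finset.mul_sum,
      ← Finset.mul_sum, hpM, sum_qW]
    have := second_moment (n := n) hp hp1 hs hs1
    linarith
  calc _ ≤ ∑ ω : (Edge n → Bool) × (Edge n → Bool), ((pM p s ω.1 ω.2 - ptM p s ω.1 ω.2) +
        |ptM p s ω.1 ω.2 - qW p s ω.1 ω.2|) := by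
        refine Finset.sum_le_sum fun ω _ => ?_
        refine (abs_sub_le _ (ptM p s ω.1 ω.2) _).trans ?_
        rw [abs_of_nonneg (sub_nonneg.2 (hpt ω))]
    _ ≤ _ := by
        rw [Finset.sum_add_distrib]
        exact add_le_add hdiff (Real.le_sqrt_of_sq_le hcs)

/-! ### From measures to weights -/

instance instMeasurableSingletonClassPerm (n : ℕ) :
    MeasurableSingletonClass (Equiv.Perm (Fin n)) := ⟨fun _ => trivial⟩

instance isFiniteMeasure_bern (p : ℝ) : IsFiniteMeasure (bern p) := by
  refine ⟨?_⟩
  simp [bern]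

instance isFiniteMeasure_bernEdges (n : ℕ) (p : ℝ) : IsFiniteMeasure (bernEdges n p) := by
  unfold bernEdges; infer_instance

instance isFiniteMeasure_permUniform (n : ℕ) : IsFiniteMeasure (permUniform n) := by
  unfold permUniform; infer_instance

theorem bern_real_singleton {p : ℝ} (hp : 0 ≤ p) (hp1 : p ≤ 1) (b : Bool) :
    (bern p).real {b} = bw p b := by
  have h : 0 ≤ 1 - p := by linarith
  rcases b <;> simp [bern, bw, measureReal_def, hp, h]

theorem bernEdges_real_singleton {n : ℕ} {p : ℝ} (hp : 0 ≤ p) (hp1 : p ≤ 1)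
    (A : Edge n → Bool) : (bernEdges n p).real {A} = ∏ e, bw p (A e) := by
  rw [measureReal_def, bernEdges, Measure.pi_singleton, ENNReal.toReal_prod]
  exact Finset.prod_congr rfl fun e _ => bern_real_singleton hp hp1 _

theorem permUniform_real_singleton {n : ℕ} (π : Equiv.Perm (Fin n)) :
    (permUniform n).real {π} = (n.factorial : ℝ)⁻¹ := by
  rw [measureReal_def, permUniform, PMF.toMeasure_apply_singleton _ _ (measurableSet_singleton π),
    PMF.uniformOfFintype_apply, Fintype.card_perm, Fintype.card_fin]
  simp

theorem prod_real_singleton {α β : Type*} [MeasurableSpace α] [MeasurableSpace β]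
    (μ : Measure α) (ν : Measure β) [SigmaFinite ν] (x : α × β) :
    (μ.prod ν).real {x} = μ.real {x.1} * ν.real {x.2} := by
  rw [← measureReal_prod_prod, Set.singleton_prod_singleton]

theorem QER_real_singleton {n : ℕ} {p s : ℝ} (hp : 0 ≤ p * s) (hp1 : p * s ≤ 1)
    (ω : (Edge n → Bool) × (Edge n → Bool)) :
    (QER n p s).real {ω} = qW p s ω.1 ω.2 := by
  rw [QER, prod_real_singleton, bernEdges_real_singleton hp hp1, bernEdges_real_singleton hp hp1, qW]

theorem map_real_singleton {α β : Type*} [Fintype α] [MeasurableSpace α]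
    [MeasurableSingletonClass α] [DecidableEq β] [MeasurableSpace β] [MeasurableSingletonClass β]
    (μ : Measure α) [IsFiniteMeasure μ] (f : α → β) (y : β) :
    (μ.map f).real {y} = ∑ x, if f x = y then μ.real {x} else 0 := by
  rw [map_measureReal_apply (measurable_of_finite f) (measurableSet_singleton y),
    ← Finset.sum_filter, sum_measureReal_singleton]
  congr 1
  ext x
  simp

theorem sum_jw (p s : ℝ) (a b : Bool) :
    ∑ x : Bool × Bool × Bool, (if (x.1 && x.2.1) = a ∧ (x.1 && x.2.2) = b then
      bw p x.1 * (bw s x.2.1 * bw s x.2.2) else 0) = jw p s a b := by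
  rcases a <;> rcases b <;> simp [Fintype.sum_prod_type, bw, jw, sq] <;> ring

/-- Summing out the parent graph and the two subsampling families gives the joint weights `jw`. -/
theorem sum_parent {n : ℕ} (p s : ℝ) (A B : Edge n → Bool) :
    ∑ x : (Edge n → Bool) × (Edge n → Bool) × (Edge n → Bool),
      (if (∀ e, (x.1 e && x.2.1 e) = A e) ∧ (∀ e, (x.1 e && x.2.2 e) = B e) then
        (∏ e, bw p (x.1 e)) * ((∏ e, bw s (x.2.1 e)) * ∏ e, bw s (x.2.2 e)) else 0) =
    ∏ e, jw p s (A e) (B e) := by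
  let φ : (Edge n → Bool × Bool × Bool) ≃
      (Edge n → Bool) × (Edge n → Bool) × (Edge n → Bool) :=
    (Equiv.arrowProdEquivProdArrow (Edge n) (fun _ => Bool) (fun _ => Bool × Bool)).trans
      ((Equiv.refl _).prodCongr
        (Equiv.arrowProdEquivProdArrow (Edge n) (fun _ => Bool) (fun _ => Bool)))
  rw [← φ.sum_comp]
  simp_rw [← sum_jw]
  rw [← sum_prod_pi (fun (e : Edge n) (x : Bool × Bool × Bool) =>
    if (x.1 && x.2.1) = A e ∧ (x.1 && x.2.2) = B e then
      bw p x.1 * (bw s x.2.1 * bw s x.2.2) else 0)]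
  refine Finset.sum_congr rfl fun X _ => ?_
  have h1 : ∀ e, (φ X).1 e = (X e).1 := fun _ => rfl
  have h2 : ∀ e, (φ X).2.1 e = (X e).2.1 := fun _ => rfl
  have h3 : ∀ e, (φ X).2.2 e = (X e).2.2 := fun _ => rfl
  simp_rw [h1, h2, h3, ← forall_and]
  split_ifs with h
  · rw [← Finset.prod_mul_distrib, ← Finset.prod_mul_distrib]
    exact Finset.prod_congr rfl fun e _ => (if_pos (h e)).symm
  · obtain ⟨e, he⟩ := not_forall.1 h
    exact (Finset.prod_eq_zero (Finset.mem_univ e) (if_neg he)).symm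

theorem PER_real_singleton {n : ℕ} {p s : ℝ} (hp : 0 ≤ p) (hp1 : p ≤ 1) (hs : 0 ≤ s)
    (hs1 : s ≤ 1) (ω : (Edge n → Bool) × (Edge n → Bool)) :
    (PER n p s).real {ω} = pM p s ω.1 ω.2 := by
  classical
  obtain ⟨A, B⟩ := ω
  rw [PER, map_real_singleton, Fintype.sum_prod_type, pM, Finset.mul_sum]
  refine Finset.sum_congr rfl fun π _ => ?_
  rw [pW, ← sum_parent p s A (fun e => B (edgePerm π e)), Finset.mul_sum]
  refine Finset.sum_congr rfl fun x _ => ?_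
  obtain ⟨G, U, V⟩ := x
  have hiff : ((fun e => G e && U e, fun f => G (edgeMap π⁻¹ f) && V (edgeMap π⁻¹ f)) = (A, B)) ↔
      ((∀ e, (G e && U e) = A e) ∧ ∀ e, (G e && V e) = B (edgePerm π e)) := by
    rw [Prod.mk.injEq, funext_iff, funext_iff]
    refine and_congr Iff.rfl ?_
    rw [← (edgePerm π).forall_congr_right]
    refine forall_congr' fun e => ?_
    rw [edgePerm_apply, ← edgeMap_mul, inv_mul_cancel, edgeMap_one]
  rw [prod_real_singleton, prod_real_singleton, prod_real_singleton, permUniform_real_singleton,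
    bernEdges_real_singleton hp hp1, bernEdges_real_singleton hs hs1,
    bernEdges_real_singleton hs hs1, mul_ite, mul_zero]
  exact if_congr hiff rfl rfl

theorem TV_nonneg {Ω : Type*} [MeasurableSpace Ω] (P Q : Measure Ω) : 0 ≤ TV P Q :=
  Real.iSup_nonneg fun _ => abs_nonneg _

theorem TV_le_sum {Ω : Type*} [Fintype Ω] [MeasurableSpace Ω] [MeasurableSingletonClass Ω]
    (P Q : Measure Ω) [IsFiniteMeasure P] [IsFiniteMeasure Q] :
    TV P Q ≤ ∑ ω, |P.real {ω} - Q.real {ω}| := by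
  classical
  have : Nonempty {S : Set Ω // MeasurableSet S} := ⟨⟨∅, MeasurableSet.empty⟩⟩
  refine ciSup_le fun S => ?_
  have h : ∀ (μ : Measure Ω) [IsFiniteMeasure μ],
      (μ S.1).toReal = ∑ ω ∈ S.1.toFinset, μ.real {ω} := by
    intro μ _
    rw [sum_measureReal_singleton, Set.coe_toFinset, measureReal_def]
  rw [h P, h Q, ← Finset.sum_sub_distrib]
  exact (Finset.abs_sum_le_sum_abs _ _).trans
    (Finset.sum_le_sum_of_subset_of_nonneg (Finset.subset_univ _) fun _ _ _ => abs_nonneg _)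

theorem TV_PER_QER_le {n : ℕ} {p s : ℝ} (hp : 0 ≤ p) (hp1 : p ≤ 1) (hs : 0 ≤ s) (hs1 : s ≤ 1) :
    TV (PER n p s) (QER n p s) ≤
      ∑ ω : (Edge n → Bool) × (Edge n → Bool), |pM p s ω.1 ω.2 - qW p s ω.1 ω.2| := by
  have : IsFiniteMeasure (PER n p s) := by unfold PER; infer_instance
  have : IsFiniteMeasure (QER n p s) := by unfold QER; infer_instance
  refine (TV_le_sum _ _).trans (le_of_eq (Finset.sum_congr rfl fun ω _ => ?_))
  rw [PER_real_singleton hp hp1 hs hs1,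
    QER_real_singleton (mul_nonneg hp hs) (mul_le_one₀ hp1 hs hs1)]

/-- For `s = 0` both models are almost surely empty. -/
theorem TV_zero {n : ℕ} {p : ℝ} (hp : 0 ≤ p) (hp1 : p ≤ 1) :
    TV (PER n p 0) (QER n p 0) ≤ 0 := by
  refine (TV_PER_QER_le hp hp1 le_rfl zero_le_one).trans (le_of_eq ?_)
  refine Finset.sum_eq_zero fun ω _ => ?_
  have hj : ∀ a b, jw p 0 a b = bw (p * 0) a * bw (p * 0) b := by
    intro a b; rcases a <;> rcases b <;> simp [jw, bw]
  have hN : (n.factorial : ℝ) ≠ 0 := by exact_mod_cast n.factorial_ne_zero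
  have h : ∀ π : Equiv.Perm (Fin n), pW p 0 π ω.1 ω.2 = qW p 0 ω.1 ω.2 := by
    intro π
    simp only [pW, qW, hj]
    rw [Finset.prod_mul_distrib, Equiv.prod_comp (edgePerm π) (fun e => bw (p * 0) (ω.2 e))]
  simp only [pM, h]
  rw [Finset.sum_const, Finset.card_univ, Fintype.card_perm, Fintype.card_fin, nsmul_eq_mul,
    inv_mul_cancel_left₀ hN, sub_self, abs_zero]

/-! ### Asymptotics -/

/-- The union bound is at most `q ∑ (k + 1) (k + 2) (1 - δ)^k = 2 q / δ³`, and `q ≤ 1 / n`. -/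
theorem eps_le {n : ℕ} {q δ : ℝ} (hn : 0 < n) (hq : 0 ≤ q) (hδ : 0 < δ) (hδ1 : δ ≤ 1)
    (h : n * q ≤ 1 - δ) :
    ∑ k ∈ Finset.range (n + 1), (k : ℝ) ^ 2 * n ^ k * q ^ (k + 1) ≤ 2 / (n * δ ^ 3) := by
  have hn' : (0 : ℝ) < n := by exact_mod_cast hn
  set x := 1 - δ with hx
  have hx0 : 0 ≤ x := by linarith
  have hx1 : ‖x‖ < 1 := by rw [Real.norm_of_nonneg hx0]; linarith
  have hsum := hasSum_choose_mul_geometric_of_norm_lt_one 2 hx1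
  have hq' : q ≤ 1 / n := by
    rw [le_div_iff₀ hn']; nlinarith
  calc ∑ k ∈ Finset.range (n + 1), (k : ℝ) ^ 2 * n ^ k * q ^ (k + 1)
      ≤ ∑ k ∈ Finset.range (n + 1), 2 * q * (((k + 2).choose 2 : ℕ) * x ^ k) := by
        refine Finset.sum_le_sum fun k _ => ?_
        have h1 : ((k + 2).choose 2 : ℝ) = (k + 2) * (k + 1) / 2 := by
          rw [Nat.cast_choose_two]; push_cast; ring
        have h2 : (n * q) ^ k ≤ x ^ k := pow_le_pow_left₀ (by positivity) h k
        have h3 : (k : ℝ) ^ 2 ≤ (k + 2) * (k + 1) := by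
          have : (0 : ℝ) ≤ k := k.cast_nonneg
          nlinarith
        calc (k : ℝ) ^ 2 * n ^ k * q ^ (k + 1) = q * ((k : ℝ) ^ 2 * (n * q) ^ k) := by
              rw [mul_pow]; ring
          _ ≤ q * ((k + 2) * (k + 1) * x ^ k) := by gcongr
          _ = _ := by rw [h1]; ring
    _ ≤ 2 * q * (1 / (1 - x) ^ (2 + 1)) := by
        rw [← Finset.mul_sum]
        refine mul_le_mul_of_nonneg_left ?_ (by positivity)
        exact sum_le_hasSum _ (fun k _ => by positivity) hsum
    _ ≤ _ := by
        have : 1 - x = δ := by rw [hx]; ring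
        rw [this]
        calc 2 * q * (1 / δ ^ (2 + 1)) ≤ 2 * (1 / n) * (1 / δ ^ (2 + 1)) := by gcongr
          _ = _ := by field_simp

theorem geom_sum_le_inv {n : ℕ} {x : ℝ} (h0 : 0 ≤ x) (h1 : x < 1) :
    ∑ m ∈ Finset.range (n + 1), x ^ m ≤ (1 - x)⁻¹ :=
  sum_le_hasSum _ (fun k _ => by positivity) (hasSum_geometric_of_lt_one h0 h1)

/-- The quantitative bound on the total variation distance. -/
theorem TV_bound {n : ℕ} {p s δ : ℝ} (hn : 0 < n) (hp : 0 < p) (hp1 : p < 1) (hs : 0 ≤ s)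
    (hs1 : 16 * s < 1) (hδ : 0 < δ) (h : s ^ 2 ≤ (1 - δ) / (n * p)) :
    TV (PER n p s) (QER n p s) ≤
      2 / (n * δ ^ 3) + √((1 - 16 * s)⁻¹ - 1 + 2 * (2 / (n * δ ^ 3))) := by
  have hn' : (0 : ℝ) < n := by exact_mod_cast hn
  -- The null weights vanish somewhere if `s = 0`, so this case is excluded from the second moment
  -- computation.
  rcases hs.eq_or_lt with rfl | hs'
  · exact (TV_zero hp.le hp1.le).trans (by positivity)
  have hnp : 0 < n * p := by positivity
  rw [le_div_iff₀ hnp] at h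
  have hδ1 : δ ≤ 1 := by nlinarith [mul_nonneg (sq_nonneg s) hnp.le]
  refine (TV_PER_QER_le hp.le hp1.le hs (by linarith)).trans ?_
  refine l1_bound hp hp1 hs' (by linarith) (eps_le hn (by positivity) hδ hδ1 ?_)
    (geom_sum_le_inv (by positivity) hs1)
  linarith

/-- Theorem 2 of the paper, sparse converse, weak detection: in the correlated
Erdős–Rényi detection problem with sparse parent graph (`p_n ≤ n^{-α}` eventually for some fixed
`α > 0`), if `s_n² ≤ (1-δ_n)/(n p_n)` with `n^{1/3} δ_n → ∞`, `s_n² ≤ 0.01` for all `n`, and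
moreover `s_n → 0`, then `TV(P_{n,p_n,s_n}, Q_{n,p_n,s_n}) → 0`, i.e. even weak detection is
impossible. -/
theorem stmt5 (p s : ℕ → ℝ) (hp : ∀ n, p n ∈ Set.Ioo (0 : ℝ) 1)
    (hs : ∀ n, s n ∈ Set.Icc (0 : ℝ) 1)
    (hsparse : ∃ α : ℝ, 0 < α ∧ ∀ᶠ n : ℕ in atTop, p n ≤ (n : ℝ) ^ (-α))
    (hδ : ∃ δ : ℕ → ℝ, Tendsto (fun n : ℕ => (n : ℝ) ^ ((1 : ℝ) / 3) * δ n) atTop atTop ∧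
      ∀ n, (s n) ^ 2 ≤ (1 - δ n) / ((n : ℝ) * p n) ∧ (s n) ^ 2 ≤ 0.01)
    (hs0 : Tendsto s atTop (nhds 0)) :
    Tendsto (fun n => TV (PER n (p n) (s n)) (QER n (p n) (s n))) atTop (nhds 0) := by
  obtain ⟨δ, hδ, hsδ⟩ := hδ
  have hε : Tendsto (fun n : ℕ => 2 / ((n : ℝ) * δ n ^ 3)) atTop (nhds 0) := by
    have h1 : Tendsto (fun n : ℕ => 2 / ((n : ℝ) ^ ((1 : ℝ) / 3) * δ n) ^ 3) atTop (nhds 0) :=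
      ((tendsto_pow_atTop three_ne_zero).comp hδ).const_div_atTop 2
    refine h1.congr fun n => ?_
    rw [mul_pow, ← Real.rpow_natCast ((n : ℝ) ^ ((1 : ℝ) / 3)), ← Real.rpow_mul n.cast_nonneg]
    norm_num
  have hM : Tendsto (fun n => (1 - 16 * s n)⁻¹ - 1) atTop (nhds 0) := by
    have h1 : Tendsto (fun n => 1 - 16 * s n) atTop (nhds (1 - 16 * 0)) :=
      tendsto_const_nhds.sub (hs0.const_mul 16)
    have h2 := (h1.inv₀ (by norm_num)).sub_const 1
    norm_num at h2
    exact h2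
  have hlim : Tendsto (fun n : ℕ => 2 / ((n : ℝ) * δ n ^ 3) +
      √((1 - 16 * s n)⁻¹ - 1 + 2 * (2 / ((n : ℝ) * δ n ^ 3)))) atTop (nhds 0) := by
    have h1 := hε.add (hM.add (hε.const_mul 2)).sqrt
    simpa using h1
  refine squeeze_zero' (Eventually.of_forall fun n => TV_nonneg _ _) ?_ hlim
  filter_upwards [hδ.eventually_gt_atTop 0, eventually_gt_atTop 0,
    hs0.eventually_lt_const (show (0 : ℝ) < 1 / 16 by norm_num)] with n h1 h2 h3
  refine TV_bound h2 (hp n).1 (hp n).2 (hs n).1 (by linarith) ?_ (hsδ n).1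
  exact pos_of_mul_pos_right h1 (by positivity)

end
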